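/- Almost surely, the algebraic difference C_2 − C_1 = {y − x : x ∈ C_1, y ∈ C_2} contains a nonempty open interval. -/

import Mathlib

open MeasureTheory ProbabilityTheory

/-- Words over the alphabet `{1,2}` (represented as `Fin 2`), indexing the nodes of the
binary tree of the construction.  A word `i :: w` is a child of the word `w`. -/
abbrev LarssonWord := List (Fin 2)

/-- The left endpoint of the level-`w.length` interval of Larsson's random Cantor set
indexed by the word `w`, given the family `u` of (realized) uniform random variables.
The level-0 interval is `[0,1]`; if `I_w = [α, α + a^n]` is a level-`n` interval, its two
level-`(n+1)` subintervals are `[α + a^n (b + U), α + a^n (b + U) + a^(n+1)]` and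
`[α + a^n (1/2 + a/2 + U'), α + a^n (1/2 + a/2 + U') + a^(n+1)]`. -/
noncomputable def larssonLeft (a b : ℝ) (u : LarssonWord → ℝ) : LarssonWord → ℝ
  | [] => 0
  | (i :: w) => larssonLeft a b u w +
      a ^ w.length * ((if i = 0 then b else 1 / 2 + a / 2) + u (i :: w))

/-- `C^n`: the union of the `2^n` level-`n` intervals. -/
noncomputable def larssonLevel (a b : ℝ) (u : LarssonWord → ℝ) (n : ℕ) : Set ℝ :=
  ⋃ w ∈ {w : LarssonWord | w.length = n},
    Set.Icc (larssonLeft a b u w) (larssonLeft a b u w + a ^ n)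

/-- Larsson's random Cantor set `C = ⋂ n, C^n`. -/
noncomputable def larssonCantor (a b : ℝ) (u : LarssonWord → ℝ) : Set ℝ :=
  ⋂ n : ℕ, larssonLevel a b u n

open scoped ENNReal NNReal

/-!
Let `h` be the density of the difference of two points chosen by the natural (uniformly branching)
measures of the two sets. It solves a self-similarity equation, so it can be constructed as the
law of a random series, and it is Lipschitz. Let `F n d` be its conditional value at `d` given the
first `n` levels: a sum over pairs of level-`n` intervals of rescaled copies of `h`, and a
martingale in `n`.

Level-`n` intervals are so well separated that the pairs whose difference can be `d` form a
matching. Given the first `n` levels, their contributions to `F (n + 1) d` are therefore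
independent, and each is of order `(4 * a) ^ (-n)`. As `4 * a > 1`, the increments have exponential
tails at geometrically decreasing scales. The Lipschitz constants of `F n` grow only geometrically,
so a union bound over a grid makes `F n` converge uniformly, almost surely. The limit is continuous
with integral one, so all `F n` with `n` large are nonzero on a common interval. For `d` in this
interval, every large level has a pair of intervals containing points with difference `d`, and
compactness gives such points in the two Cantor sets.
-/

/-! ### Self-similar measures and their densities -/

section SelfSimilar

variable {ι Ω X : Type*} [mX : MeasurableSpace X]

lemma measurable_iSup_comap {U : ι → Ω → X} {S : Set ι} {i : ι} (hi : i ∈ S) :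
    Measurable[⨆ i ∈ S, mX.comap (U i)] (U i) :=
  (comap_measurable (U i)).mono (le_iSup₂_of_le i hi le_rfl) le_rfl

lemma indepFun_of_measurable_iSup_comap {β γ : Type*} [MeasurableSpace Ω]
    [MeasurableSpace β] [MeasurableSpace γ] {P : Measure Ω} {U : ι → Ω → X}
    (hU : ∀ i, Measurable (U i)) (hind : iIndepFun U P) {S T : Set ι} (hST : Disjoint S T)
    {f : Ω → β} {g : Ω → γ}
    (hf : Measurable[⨆ i ∈ S, mX.comap (U i)] f) (hg : Measurable[⨆ i ∈ T, mX.comap (U i)] g) :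
    IndepFun f g P :=
  (IndepFun_iff_Indep ..).2 <| indep_of_indep_of_le_left (indep_of_indep_of_le_right
    (indep_iSup_of_disjoint (fun i => (hU i).comap_le) hind hST) hg.comap_le) hf.comap_le

lemma map_head_tail_infinitePi (μ : ℕ → Measure X) [∀ n, IsProbabilityMeasure (μ n)] :
    (Measure.infinitePi μ).map (fun ω => (ω 0, fun n => ω (n + 1))) =
      (μ 0).prod (Measure.infinitePi fun n => μ (n + 1)) := by
  have hind : iIndepFun (fun n ω => ω n) (Measure.infinitePi μ) :=
    iIndepFun_infinitePi (X := fun _ x => x) fun _ => measurable_id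
  have h : IndepFun (fun ω : ℕ → X => ω 0) (fun ω n => ω (n + 1)) (Measure.infinitePi μ) :=
    indepFun_of_measurable_iSup_comap measurable_pi_apply hind
      (Set.disjoint_singleton_left.2 fun h => absurd rfl h : Disjoint {0} {0}ᶜ)
      (measurable_iSup_comap rfl)
      (@measurable_pi_lambda _ _ _ (_) _ _ fun n => measurable_iSup_comap n.succ_ne_zero)
  rw [h.map_prod_eq_prod_map_map (measurable_pi_apply 0).aemeasurable
      (measurable_pi_lambda _ fun n => measurable_pi_apply (n + 1)).aemeasurable,
    Measure.infinitePi_map_eval,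
    Measure.map_infinitePi_infinitePi_of_inj (P := μ) Nat.succ_injective]

lemma exists_selfSimilar_measure (δ : Measure ℝ) [IsProbabilityMeasure δ] {a R : ℝ}
    (ha : 0 < a) (ha1 : a < 1) (hδ : ∀ᵐ x ∂δ, |x| ≤ R) :
    ∃ σ : Measure ℝ, IsProbabilityMeasure σ ∧ (∀ᵐ z ∂σ, |z| ≤ R / (1 - a)) ∧
      σ = δ ∗ σ.map (a * ·) := by
  let Q : Measure (ℕ → ℝ) := Measure.infinitePi fun _ => δ
  let Z : (ℕ → ℝ) → ℝ := fun ω => ∑' k, a ^ k * ω k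
  have hZ : Measurable Z := Measurable.tsum fun k => by fun_prop
  have hQ : ∀ᵐ ω ∂Q, ∀ k, ‖a ^ k * ω k‖ ≤ a ^ k * R := by
    refine ae_all_iff.2 fun k => ?_
    have hk : Q.map (fun ω => ω k) = δ := Measure.infinitePi_map_eval (fun _ => δ) k
    rw [← hk] at hδ
    filter_upwards [ae_of_ae_map (measurable_pi_apply k).aemeasurable hδ] with ω hω
    rw [norm_mul, Real.norm_of_nonneg (by positivity)]
    exact mul_le_mul_of_nonneg_left hω (by positivity)
  have hgeo : HasSum (fun k => a ^ k * R) (R / (1 - a)) := by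
    rw [div_eq_inv_mul]
    exact (hasSum_geometric_of_lt_one ha.le ha1).mul_right R
  refine ⟨Q.map Z, Measure.isProbabilityMeasure_map hZ.aemeasurable, ?_, ?_⟩
  · rw [ae_map_iff hZ.aemeasurable (measurableSet_le (by fun_prop) (by fun_prop))]
    filter_upwards [hQ] with ω hω using tsum_of_norm_bounded hgeo hω
  have hsplit : Z =ᵐ[Q] (fun p : ℝ × (ℕ → ℝ) => p.1 + a * Z p.2) ∘
      fun ω => (ω 0, fun n => ω (n + 1)) := by
    filter_upwards [hQ] with ω hω
    simp only [Z, Function.comp_apply, (hgeo.summable.of_norm_bounded hω).tsum_eq_zero_add,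
      pow_zero, one_mul, ← tsum_mul_left, pow_succ', mul_assoc]
  calc Q.map Z
      = (δ.prod Q).map fun p => p.1 + a * Z p.2 := by
        rw [Measure.map_congr hsplit, ← Measure.map_map (by fun_prop) (by fun_prop),
          map_head_tail_infinitePi]
    _ = ((δ.map id).prod (Q.map fun ω => a * Z ω)).map fun p => p.1 + p.2 := by
        rw [Measure.map_prod_map _ _ measurable_id (by fun_prop),
          Measure.map_map (by fun_prop) (by fun_prop)]
        rfl
    _ = δ ∗ (Q.map Z).map (a * ·) := by
        rw [Measure.map_id, Measure.map_map (by fun_prop) hZ, Measure.conv]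
        rfl

lemma withDensity_conv {G : Type*} [AddCommGroup G] [MeasurableSpace G] [MeasurableAdd₂ G]
    [MeasurableSub₂ G] (μ : Measure G) [SFinite μ] [μ.IsAddRightInvariant] {f : G → ℝ≥0∞}
    (hf : Measurable f) (ν : Measure G) [SFinite ν] :
    μ.withDensity f ∗ ν = μ.withDensity fun x => ∫⁻ y, f (x - y) ∂ν := by
  refine Measure.ext_of_lintegral _ fun φ hφ => ?_
  have hF : Measurable fun x => ∫⁻ y, f (x - y) ∂ν := by fun_prop
  calc ∫⁻ x, φ x ∂(μ.withDensity f ∗ ν)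
      = ∫⁻ y, ∫⁻ x, f x * φ (y + x) ∂μ ∂ν := by
        rw [Measure.conv_comm, Measure.lintegral_conv hφ]
        exact lintegral_congr fun y =>
          lintegral_withDensity_eq_lintegral_mul _ hf (by fun_prop)
    _ = ∫⁻ y, ∫⁻ x, f (x - y) * φ x ∂μ ∂ν := lintegral_congr fun y => by
        rw [← lintegral_sub_right_eq_self _ y]
        simp only [add_sub_cancel]
    _ = ∫⁻ x, (∫⁻ y, f (x - y) ∂ν) * φ x ∂μ := by
        rw [lintegral_lintegral_swap (by fun_prop)]
        exact lintegral_congr fun x =>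
          lintegral_mul_const (φ x) (f := fun y => f (x - y)) (by fun_prop)
    _ = ∫⁻ x, φ x ∂μ.withDensity fun x => ∫⁻ y, f (x - y) ∂ν :=
        (lintegral_withDensity_eq_lintegral_mul _ hF hφ).symm

lemma withDensity_ofReal_conv {f : ℝ → ℝ} (hf : Continuous f) (h0 : ∀ x, 0 ≤ f x) {M : ℝ}
    (hM : ∀ x, f x ≤ M) (μ : Measure ℝ) [IsFiniteMeasure μ] :
    volume.withDensity (fun x => .ofReal (f x)) ∗ μ =
      volume.withDensity fun x => .ofReal (∫ y, f (x - y) ∂μ) := by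
  rw [withDensity_conv volume (by fun_prop)]
  congr 1 with x
  rw [ofReal_integral_eq_lintegral_ofReal _ (.of_forall fun y => h0 _)]
  exact .of_bound (by fun_prop) M (.of_forall fun y => by
    simpa only [Real.norm_of_nonneg (h0 _)] using hM _)

lemma map_const_mul_withDensity_ofReal {a : ℝ} (ha : 0 < a) {f : ℝ → ℝ} (hf : Measurable f) :
    (volume.withDensity fun x => .ofReal (f x)).map (a * ·) =
      volume.withDensity fun x => .ofReal (a⁻¹ * f (x / a)) := by
  refine Measure.ext_of_lintegral _ fun φ hφ => ?_
  rw [lintegral_map hφ (by fun_prop), lintegral_withDensity_eq_lintegral_mul _ (by fun_prop) hφ,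
    lintegral_withDensity_eq_lintegral_mul _ (by fun_prop) (by fun_prop)]
  calc ∫⁻ x, .ofReal (f x) * φ (a * x)
      = ∫⁻ x, .ofReal (f (x / a)) * φ x ∂volume.map (a * ·) := by
        rw [lintegral_map (by fun_prop) (by fun_prop)]
        simp only [mul_div_cancel_left₀ _ ha.ne']
    _ = ∫⁻ x, .ofReal (a⁻¹ * f (x / a)) * φ x := by
        rw [Real.map_volume_mul_left ha.ne', abs_of_pos (inv_pos.2 ha), lintegral_smul_measure,
          smul_eq_mul, ← lintegral_const_mul _ (by fun_prop)]
        simp only [ENNReal.ofReal_mul (inv_pos.2 ha).le, mul_assoc]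

lemma eq_of_withDensity_ofReal_eq {f g : ℝ → ℝ} (hf : Continuous f) (hg : Continuous g)
    (hf0 : ∀ x, 0 ≤ f x) (hg0 : ∀ x, 0 ≤ g x)
    (h : volume.withDensity (fun x => .ofReal (f x)) = volume.withDensity fun x => .ofReal (g x)) :
    f = g := by
  rw [withDensity_eq_iff_of_sigmaFinite (by fun_prop) (by fun_prop)] at h
  refine (Continuous.ae_eq_iff_eq volume hf hg).1 ?_
  filter_upwards [h] with x hx
  simpa only [ENNReal.toReal_ofReal, hf0, hg0] using congrArg ENNReal.toReal hx

lemma lipschitzWith_integral_sub {K : ℝ≥0} {f : ℝ → ℝ} (hf : LipschitzWith K f) {M : ℝ}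
    (hM : ∀ x, |f x| ≤ M) (μ : Measure ℝ) [IsProbabilityMeasure μ] :
    LipschitzWith K fun x => ∫ y, f (x - y) ∂μ := by
  have hint (x : ℝ) : Integrable (fun y => f (x - y)) μ :=
    .of_bound (by have := hf.continuous; fun_prop) M (.of_forall fun y => hM _)
  refine LipschitzWith.of_dist_le_mul fun x x' => ?_
  rw [dist_eq_norm, ← integral_sub (hint x) (hint x')]
  refine (norm_integral_le_of_norm_le_const (C := K * dist x x') (.of_forall fun y => ?_)).trans
    (by simp)
  simpa only [← dist_eq_norm, dist_sub_right] using hf.dist_le_mul (x - y) (x' - y)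

end SelfSimilar

section StationaryDensity

/-- `h` is a Lipschitz probability density supported in `[-1, 1]` which is a fixed point of the
transfer operator `h ↦ a⁻¹ ∫ h ((· - D) / a) ∂δ(D)`, that is, the density of the sum `D₀ + a Z` of
independent variables where `D₀` has law `δ` and `Z` has density `h`. -/
structure IsStationaryDensity (a : ℝ) (δ : Measure ℝ) (h : ℝ → ℝ) : Prop where
  nonneg : ∀ x, 0 ≤ h x
  eq_zero : ∀ x, 1 ≤ |x| → h x = 0
  lipschitz : ∃ K, LipschitzWith K h
  integral_eq_one : ∫ x, h x = 1
  fixed : ∀ e, h e = a⁻¹ * ∫ D, h ((e - D) / a) ∂δ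

lemma IsStationaryDensity.integrable {a : ℝ} {δ : Measure ℝ} {h : ℝ → ℝ}
    (hh : IsStationaryDensity a δ h) : Integrable h :=
  .of_integral_ne_zero (hh.integral_eq_one ▸ one_ne_zero)

lemma abs_le_of_lipschitzWith_of_eq_zero {K : ℝ≥0} {f : ℝ → ℝ} (hf : LipschitzWith K f) {R : ℝ}
    (hR : 0 ≤ R) (h0 : ∀ x, R ≤ |x| → f x = 0) (x : ℝ) : |f x| ≤ K * (2 * R) := by
  rcases le_or_gt R |x| with hx | hx
  · rw [h0 x hx, abs_zero]
    positivity
  · have hxR : |x - R| ≤ 2 * R := by rw [abs_le]; constructor <;> linarith [abs_lt.1 hx]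
    have := hf.dist_le_mul x R
    rw [h0 R (le_abs_self R), Real.dist_eq, sub_zero, Real.dist_eq] at this
    exact this.trans (by gcongr)

lemma density_eq_of_selfSimilar {a : ℝ} (ha : 0 < a) {δ σ : Measure ℝ} [IsFiniteMeasure δ]
    [SFinite σ] (hσ : σ = δ ∗ σ.map (a * ·)) {h : ℝ → ℝ} (hc : Continuous h) (h0 : ∀ x, 0 ≤ h x)
    {M : ℝ} (hM : ∀ x, h x ≤ M) (hσh : σ = volume.withDensity fun x => .ofReal (h x)) (e : ℝ) :
    h e = a⁻¹ * ∫ D, h ((e - D) / a) ∂δ := by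
  have ha' := (inv_pos.2 ha).le
  have h0' (x : ℝ) : 0 ≤ a⁻¹ * h (x / a) := mul_nonneg ha' (h0 _)
  have hM' (x : ℝ) : a⁻¹ * h (x / a) ≤ a⁻¹ * M := mul_le_mul_of_nonneg_left (hM _) ha'
  have hcont : Continuous fun e => ∫ D, a⁻¹ * h ((e - D) / a) ∂δ :=
    continuous_of_dominated (bound := fun _ => a⁻¹ * M) (fun e => by fun_prop)
      (fun e => .of_forall fun D => by simpa only [Real.norm_of_nonneg (h0' _)] using hM' _)
      (integrable_const _) (.of_forall fun D => by fun_prop)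
  have hdens : volume.withDensity (fun x => .ofReal (h x)) =
      volume.withDensity fun x => .ofReal (∫ D, a⁻¹ * h ((x - D) / a) ∂δ) := by
    rw [← withDensity_ofReal_conv (f := fun x => a⁻¹ * h (x / a)) (by fun_prop) h0' hM',
      ← map_const_mul_withDensity_ofReal ha hc.measurable, ← hσh, Measure.conv_comm, ← hσ]
  rw [← integral_const_mul]
  exact congrFun (eq_of_withDensity_ofReal_eq hc hcont h0
    (fun x => integral_nonneg fun D => h0' _) hdens) e

lemma exists_isStationaryDensity {a : ℝ} (ha : 0 < a) (ha1 : a < 1) {δ : Measure ℝ}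
    [IsProbabilityMeasure δ] {κ : ℝ → ℝ} (hδ : δ = volume.withDensity fun x => .ofReal (κ x))
    (hκ0 : ∀ x, 0 ≤ κ x) (hκ : ∀ x, 1 - a ≤ |x| → κ x = 0) {K : ℝ≥0} (hκK : LipschitzWith K κ) :
    ∃ h, IsStationaryDensity a δ h := by
  have hκc := hκK.continuous
  have hκM := abs_le_of_lipschitzWith_of_eq_zero hκK (sub_pos.2 ha1).le hκ
  have hδR : ∀ᵐ x ∂δ, |x| ≤ 1 - a := by
    rw [hδ, ae_withDensity_iff (by fun_prop)]
    refine .of_forall fun x hx => ?_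
    contrapose! hx
    rw [hκ x hx.le, ENNReal.ofReal_zero]
  obtain ⟨σ, _, hσ1, hσ⟩ := exists_selfSimilar_measure δ ha ha1 hδR
  rw [div_self (sub_pos.2 ha1).ne'] at hσ1
  let τ := σ.map (a * ·)
  have : IsProbabilityMeasure τ := Measure.isProbabilityMeasure_map (by fun_prop)
  let h : ℝ → ℝ := fun e => ∫ y, κ (e - y) ∂τ
  have hLip : LipschitzWith K h := lipschitzWith_integral_sub hκK hκM τ
  have hc := hLip.continuous
  have h0 (e : ℝ) : 0 ≤ h e := integral_nonneg fun y => hκ0 _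
  have hzero (e : ℝ) (he : 1 ≤ |e|) : h e = 0 := by
    have hτ : ∀ᵐ y ∂τ, |y| ≤ a := by
      rw [ae_map_iff (by fun_prop) (measurableSet_le (by fun_prop) (by fun_prop))]
      filter_upwards [hσ1] with z hz
      rw [abs_mul, abs_of_pos ha]
      exact mul_le_of_le_one_right ha.le hz
    refine integral_eq_zero_of_ae ?_
    filter_upwards [hτ] with y hy
    exact hκ _ (by linarith [abs_sub_abs_le_abs_sub e y])
  have hσh : σ = volume.withDensity fun x => .ofReal (h x) := by
    rw [hσ, hδ, withDensity_ofReal_conv hκc hκ0 (fun x => (le_abs_self _).trans (hκM x))]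
  have hhM := abs_le_of_lipschitzWith_of_eq_zero hLip zero_le_one hzero
  refine ⟨h, h0, hzero, ⟨K, hLip⟩, ?_,
    density_eq_of_selfSimilar ha hσ hc h0 (fun x => (le_abs_self _).trans (hhM x)) hσh⟩
  rw [integral_eq_lintegral_of_nonneg_ae (.of_forall h0) hc.aestronglyMeasurable,
    ← setLIntegral_univ, ← withDensity_apply _ .univ, ← hσh, measure_univ, ENNReal.toReal_one]

end StationaryDensity

/-! ### The displacement between children of the two sets -/

section Displacement

/-- The uniform probability measure on `[0, t]`. -/
noncomputable def uniformLaw (t : ℝ) : Measure ℝ :=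
  (ENNReal.ofReal t)⁻¹ • volume.restrict (Set.Icc 0 t)

instance (t : ℝ) : SFinite (uniformLaw t) := by
  unfold uniformLaw
  infer_instance

lemma isProbabilityMeasure_uniformLaw {t : ℝ} (ht : 0 < t) :
    IsProbabilityMeasure (uniformLaw t) := by
  constructor
  rw [uniformLaw, Measure.smul_apply, Measure.restrict_apply_univ, Real.volume_Icc, sub_zero,
    smul_eq_mul, ENNReal.inv_mul_cancel (by simpa using ht) ENNReal.ofReal_ne_top]

lemma ae_mem_Icc_uniformLaw (t : ℝ) : ∀ᵐ x ∂uniformLaw t, x ∈ Set.Icc 0 t :=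
  Measure.ae_smul_measure (ae_restrict_mem measurableSet_Icc) _

/-- The density of the difference of two independent uniform variables on `[0, t]`. -/
noncomputable def triangularDensity (t x : ℝ) : ℝ := max 0 (t - |x|) / t ^ 2

lemma triangularDensity_nonneg (t x : ℝ) : 0 ≤ triangularDensity t x := by
  unfold triangularDensity
  positivity

lemma triangularDensity_eq_zero {t x : ℝ} (h : t ≤ |x|) : triangularDensity t x = 0 := by
  rw [triangularDensity, max_eq_left (by linarith), zero_div]

lemma lipschitzWith_triangularDensity (t : ℝ) :
    LipschitzWith (t ^ 2)⁻¹.toNNReal (triangularDensity t) := by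
  refine LipschitzWith.of_dist_le_mul fun x y => ?_
  rw [Real.coe_toNNReal _ (by positivity), Real.dist_eq, triangularDensity, triangularDensity,
    ← sub_div, abs_div, abs_of_nonneg (sq_nonneg t), div_eq_inv_mul]
  gcongr
  calc |max 0 (t - |x|) - max 0 (t - |y|)| ≤ |(t - |x|) - (t - |y|)| := by
        simpa using abs_max_sub_max_le_max 0 (t - |x|) 0 (t - |y|)
    _ = |(|y| - |x|)| := by ring_nf
    _ ≤ dist x y := by rw [dist_comm]; exact abs_abs_sub_abs_le y x

lemma volume_Icc_inter_preimage_add (t z : ℝ) :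
    volume ((z + ·) ⁻¹' Set.Icc 0 t ∩ Set.Icc 0 t) = .ofReal (t - |z|) := by
  rw [Set.preimage_const_add_Icc, Set.Icc_inter_Icc, Real.volume_Icc]
  congr 1
  simp only [max_def, min_def, zero_sub]
  rcases abs_cases z with ⟨h, _⟩ | ⟨h, _⟩ <;> rw [h] <;> split_ifs <;> linarith

lemma map_sub_prod_uniformLaw {t : ℝ} (ht : 0 < t) (c : ℝ) :
    ((uniformLaw t).prod (uniformLaw t)).map (fun p => c + (p.2 - p.1)) =
      volume.withDensity fun z => .ofReal (triangularDensity t (z - c)) := by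
  let f : ℝ → ℝ≥0∞ := (Set.Icc 0 t).indicator fun _ => (ENNReal.ofReal t)⁻¹
  have hf : Measurable f := measurable_const.indicator measurableSet_Icc
  have hu : uniformLaw t = volume.withDensity f := by
    rw [withDensity_indicator measurableSet_Icc, withDensity_const, uniformLaw]
  have hconv : ((uniformLaw t).prod (uniformLaw t)).map (fun p => c + (p.2 - p.1)) =
      uniformLaw t ∗ (uniformLaw t).map (c - ·) := by
    nth_rw 3 [← Measure.map_id (μ := uniformLaw t)]
    rw [Measure.conv, Measure.map_prod_map _ _ measurable_id (by fun_prop),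
      ← Measure.prod_swap, Measure.map_map (by fun_prop) measurable_swap, Measure.prod_swap,
      Measure.map_map (by fun_prop) (by fun_prop)]
    refine congrArg (Measure.map · _) (funext fun p => ?_)
    simp only [Function.comp_apply, Prod.map_fst, Prod.map_snd, Prod.fst_swap, Prod.snd_swap, id]
    ring
  rw [hconv]
  nth_rw 1 [hu]
  rw [withDensity_conv volume hf]
  congr 1 with z
  let A := (z - c + ·) ⁻¹' Set.Icc 0 t
  have hA : MeasurableSet A := (by fun_prop : Measurable (z - c + ·)) measurableSet_Icc
  calc ∫⁻ y, f (z - y) ∂(uniformLaw t).map (c - ·)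
      = ∫⁻ x, A.indicator (fun _ => (ENNReal.ofReal t)⁻¹) x ∂uniformLaw t := by
        rw [lintegral_map (by fun_prop) (by fun_prop)]
        refine lintegral_congr fun x => ?_
        rw [← sub_add]
        rfl
    _ = (ENNReal.ofReal t)⁻¹ * ((ENNReal.ofReal t)⁻¹ * .ofReal (t - |z - c|)) := by
        rw [lintegral_indicator_const hA, uniformLaw, Measure.smul_apply, smul_eq_mul,
          Measure.restrict_apply hA, volume_Icc_inter_preimage_add]
    _ = .ofReal (triangularDensity t (z - c)) := by
        rw [triangularDensity, ENNReal.ofReal_div_of_pos (by positivity), ENNReal.ofReal_pow ht.le,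
          ENNReal.ofReal_max, ENNReal.ofReal_zero, max_eq_right zero_le, ENNReal.div_eq_inv_mul,
          ENNReal.inv_pow, pow_two, mul_assoc]

/-- The position of the `i`-th child inside a unit interval before its random shift. -/
noncomputable def childOffset (a b : ℝ) (i : Fin 2) : ℝ := if i = 0 then b else 1 / 2 + a / 2

/-- The range `t` of the random shifts. -/
noncomputable def shiftRange (a b : ℝ) : ℝ := (1 - 3 * a - 2 * b) / 2

/-- The law of the displacement between a uniformly chosen child of an interval of the first set
and a uniformly chosen child of an interval of the second one, in units of the parent length. -/
noncomputable def displacementLaw (a b : ℝ) : Measure ℝ :=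
  (4 : ℝ≥0∞)⁻¹ • ∑ i, ∑ j, ((uniformLaw (shiftRange a b)).prod (uniformLaw (shiftRange a b))).map
    fun p => childOffset a b j + p.2 - (childOffset a b i + p.1)

/-- The density of `displacementLaw a b`. -/
noncomputable def displacementDensity (a b x : ℝ) : ℝ :=
  4⁻¹ * ∑ i, ∑ j, triangularDensity (shiftRange a b) (x - (childOffset a b j - childOffset a b i))

variable {a b : ℝ}

lemma shiftRange_pos (hab : 3 * a + 2 * b < 1) : 0 < shiftRange a b := by
  unfold shiftRange
  linarith

lemma displacementDensity_nonneg (a b x : ℝ) : 0 ≤ displacementDensity a b x :=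
  mul_nonneg (by norm_num)
    (Finset.sum_nonneg fun _ _ => Finset.sum_nonneg fun _ _ => triangularDensity_nonneg _ _)

lemma displacementDensity_eq_zero (ha : 0 ≤ a) (hb : 0 ≤ b) (hab : 3 * a + 2 * b < 1) {x : ℝ}
    (hx : 1 - a ≤ |x|) : displacementDensity a b x = 0 := by
  have ht : shiftRange a b ≤ |x| - (1 / 2 + a / 2 - b) := by
    unfold shiftRange
    linarith
  refine mul_eq_zero_of_right _ (Finset.sum_eq_zero fun i _ => Finset.sum_eq_zero fun j _ =>
    triangularDensity_eq_zero (ht.trans ?_))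
  have hij : |childOffset a b j - childOffset a b i| ≤ 1 / 2 + a / 2 - b := by
    unfold childOffset
    rw [abs_le]
    constructor <;> split_ifs <;> linarith
  linarith [abs_sub_abs_le_abs_sub x (childOffset a b j - childOffset a b i)]

lemma lipschitzWith_displacementDensity (a b : ℝ) :
    LipschitzWith (shiftRange a b ^ 2)⁻¹.toNNReal (displacementDensity a b) := by
  refine LipschitzWith.of_dist_le_mul fun x y => ?_
  have h (i j : Fin 2) := (lipschitzWith_triangularDensity (shiftRange a b)).dist_le_mul
    (x - (childOffset a b j - childOffset a b i)) (y - (childOffset a b j - childOffset a b i))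
  simp only [dist_sub_right] at h
  rw [Real.dist_eq, displacementDensity, displacementDensity, ← mul_sub, abs_mul,
    abs_of_pos (by norm_num), inv_mul_le_iff₀ (by norm_num), ← Real.dist_eq]
  calc _ ≤ ∑ i : Fin 2, ∑ j : Fin 2, _ :=
        (dist_sum_sum_le _ _ _).trans (Finset.sum_le_sum fun i _ =>
          (dist_sum_sum_le _ _ _).trans (Finset.sum_le_sum fun j _ => h i j))
    _ = _ := by
        simp only [Fin.sum_univ_two]
        ring

lemma displacementLaw_eq_withDensity (hab : 3 * a + 2 * b < 1) :
    displacementLaw a b = volume.withDensity fun x => .ofReal (displacementDensity a b x) := by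
  have hm (c : ℝ) :
      Measurable fun x => ENNReal.ofReal (triangularDensity (shiftRange a b) (x - c)) :=
    have := (lipschitzWith_triangularDensity (shiftRange a b)).continuous
    by fun_prop
  have h (i j : Fin 2) : (fun p : ℝ × ℝ => childOffset a b j + p.2 - (childOffset a b i + p.1)) =
      fun p => childOffset a b j - childOffset a b i + (p.2 - p.1) := by
    ext p
    ring
  have h4 : (4 : ℝ≥0∞)⁻¹ = .ofReal 4⁻¹ := by
    rw [ENNReal.ofReal_inv_of_pos (by norm_num), ENNReal.ofReal_ofNat]
  ext s hs
  simp only [displacementLaw, h, map_sub_prod_uniformLaw (shiftRange_pos hab), Measure.smul_apply,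
    Measure.finsetSum_apply, withDensity_apply _ hs, smul_eq_mul]
  simp only [← lintegral_finsetSum _ fun _ _ => hm _]
  rw [← lintegral_finsetSum _ fun _ _ => Finset.measurable_fun_sum _ fun _ _ => hm _,
    ← lintegral_const_mul _ (Finset.measurable_fun_sum _ fun _ _ =>
      Finset.measurable_fun_sum _ fun _ _ => hm _)]
  refine lintegral_congr fun x => ?_
  have htri (i j : Fin 2) := triangularDensity_nonneg (shiftRange a b)
    (x - (childOffset a b j - childOffset a b i))
  rw [displacementDensity, ENNReal.ofReal_mul (by norm_num), h4,
    ENNReal.ofReal_sum_of_nonneg fun i _ => Finset.sum_nonneg fun j _ => htri i j]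
  simp only [ENNReal.ofReal_sum_of_nonneg fun _ _ => htri _ _]

lemma isProbabilityMeasure_displacementLaw (hab : 3 * a + 2 * b < 1) :
    IsProbabilityMeasure (displacementLaw a b) := by
  have := isProbabilityMeasure_uniformLaw (shiftRange_pos hab)
  have (i j : Fin 2) := Measure.isProbabilityMeasure_map
    (μ := (uniformLaw (shiftRange a b)).prod (uniformLaw (shiftRange a b)))
    (f := fun p => childOffset a b j + p.2 - (childOffset a b i + p.1)) (by fun_prop)
  constructor
  simp only [displacementLaw, Measure.smul_apply, Measure.finsetSum_apply, measure_univ,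
    Finset.sum_const, Finset.card_univ, Fintype.card_fin, smul_eq_mul, nsmul_eq_mul, mul_one]
  rw [Nat.cast_ofNat, ← two_add_two_eq_four, ← two_mul]
  exact ENNReal.inv_mul_cancel (by simp) (by finiteness)

lemma exists_isStationaryDensity_displacementLaw (ha : 0 < a) (hb : 0 ≤ b)
    (hab : 3 * a + 2 * b < 1) : ∃ h, IsStationaryDensity a (displacementLaw a b) h := by
  have := isProbabilityMeasure_displacementLaw hab
  exact exists_isStationaryDensity ha (by linarith) (displacementLaw_eq_withDensity hab)
    (displacementDensity_nonneg a b) (fun _ => displacementDensity_eq_zero ha.le hb hab)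
    (lipschitzWith_displacementDensity a b)

end Displacement

/-! ### Geometry of the intervals -/

section Geometry

variable {a b : ℝ} {u v : LarssonWord → ℝ} {n : ℕ}

/-- Words of length `n`, which index the intervals of level `n`. -/
abbrev LevelWord (n : ℕ) := List.Vector (Fin 2) n

lemma sum_levelWord_succ {M : Type*} [AddCommMonoid M] (f : LevelWord (n + 1) → M) :
    ∑ w, f w = ∑ w : LevelWord n, ∑ i, f (i ::ᵥ w) := by
  let e : LevelWord n × Fin 2 ≃ LevelWord (n + 1) :=
    { toFun := fun p => p.2 ::ᵥ p.1
      invFun := fun w => (w.tail, w.head)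
      left_inv := fun _ => by simp
      right_inv := fun _ => by simp }
  rw [← e.sum_comp, Fintype.sum_prod_type]
  rfl

lemma larssonLeft_cons (a b : ℝ) (u : LarssonWord → ℝ) (i : Fin 2) (w : LarssonWord) :
    larssonLeft a b u (i :: w) =
      larssonLeft a b u w + a ^ w.length * (childOffset a b i + u (i :: w)) :=
  rfl

lemma mem_larssonLevel {x : ℝ} : x ∈ larssonLevel a b u n ↔ ∃ w : LevelWord n,
    x ∈ Set.Icc (larssonLeft a b u w.toList) (larssonLeft a b u w.toList + a ^ n) := by
  simp only [larssonLevel, Set.mem_iUnion₂, Set.mem_ofPred_eq, exists_prop]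
  exact ⟨fun ⟨w, hw, hx⟩ => ⟨⟨w, hw⟩, hx⟩, fun ⟨w, hx⟩ => ⟨w.toList, w.toList_length, hx⟩⟩

lemma childOffset_add_mem_Icc (ha : 0 ≤ a) (hab : 3 * a + 2 * b < 1) (i : Fin 2)
    {x : ℝ} (hx : x ∈ Set.Icc 0 (shiftRange a b)) :
    childOffset a b i + x ∈ Set.Icc b (1 - a - b) := by
  obtain ⟨h0, h1⟩ := hx
  unfold shiftRange at h1
  unfold childOffset
  constructor <;> split_ifs <;> linarith

lemma two_mul_le_abs_childOffset_sub {i j : Fin 2} (hij : i ≠ j) {x y : ℝ}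
    (hx : x ∈ Set.Icc 0 (shiftRange a b)) (hy : y ∈ Set.Icc 0 (shiftRange a b)) :
    2 * a ≤ |childOffset a b i + x - (childOffset a b j + y)| := by
  obtain ⟨hx0, hx1⟩ := hx
  obtain ⟨hy0, hy1⟩ := hy
  unfold shiftRange at hx1 hy1
  unfold childOffset
  rw [le_abs]
  fin_cases i <;> fin_cases j <;> first | exact absurd rfl hij | skip
  · right
    simp only [Fin.isValue, Fin.zero_eta, Fin.mk_one, if_true, one_ne_zero, if_false]
    linarith
  · left
    simp only [Fin.isValue, Fin.zero_eta, Fin.mk_one, if_true, one_ne_zero, if_false]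
    linarith

lemma larssonLeft_mem_Icc (ha : 0 ≤ a) (hb : 0 ≤ b) (hab : 3 * a + 2 * b < 1)
    (hu : ∀ w, u w ∈ Set.Icc 0 (shiftRange a b)) (w : LarssonWord) :
    larssonLeft a b u w ∈ Set.Icc 0 (1 - a ^ w.length) := by
  induction w with
  | nil => simp [larssonLeft]
  | cons i w ih =>
    obtain ⟨h0, h1⟩ := childOffset_add_mem_Icc ha hab i (hu (i :: w))
    have hpow : 0 ≤ a ^ w.length := pow_nonneg ha _
    rw [larssonLeft_cons, List.length_cons, pow_succ]
    constructor <;> nlinarith [ih.1, ih.2]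

lemma two_mul_pow_le_abs_larssonLeft_sub (ha : 0 ≤ a) (hb : 0 ≤ b) (hab : 3 * a + 2 * b < 1)
    (hu : ∀ w, u w ∈ Set.Icc 0 (shiftRange a b)) {w w' : LarssonWord}
    (hlen : w.length = w'.length) (hne : w ≠ w') :
    2 * a ^ w.length ≤ |larssonLeft a b u w - larssonLeft a b u w'| := by
  induction w generalizing w' with
  | nil => exact absurd (List.eq_nil_of_length_eq_zero hlen.symm).symm hne
  | cons i w ih =>
    obtain _ | ⟨j, w'⟩ := w'
    · simp at hlen
    have hlen' : w.length = w'.length := by simpa using hlen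
    let A := childOffset a b i + u (i :: w) - (childOffset a b j + u (j :: w'))
    have hpow : 0 ≤ a ^ w.length := pow_nonneg ha _
    have hsub : larssonLeft a b u (i :: w) - larssonLeft a b u (j :: w') =
        larssonLeft a b u w - larssonLeft a b u w' + a ^ w.length * A := by
      rw [larssonLeft_cons, larssonLeft_cons, ← hlen']
      ring
    rw [hsub, List.length_cons, pow_succ]
    rcases eq_or_ne w w' with rfl | hw
    · have hA : 2 * a ≤ |A| :=
        two_mul_le_abs_childOffset_sub (fun h => hne (by rw [h])) (hu _) (hu _)
      rw [sub_self, zero_add, abs_mul, abs_of_nonneg hpow]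
      nlinarith
    · have hA : |A| ≤ 1 - a := by
        have hi := childOffset_add_mem_Icc ha hab i (hu (i :: w))
        have hj := childOffset_add_mem_Icc ha hab j (hu (j :: w'))
        rw [abs_le]
        constructor <;> linarith [hi.1, hi.2, hj.1, hj.2]
      have hmul : |a ^ w.length * A| ≤ a ^ w.length * (1 - a) := by
        rw [abs_mul, abs_of_nonneg hpow]
        gcongr
      have := abs_sub_abs_le_abs_add (larssonLeft a b u w - larssonLeft a b u w')
        (a ^ w.length * A)
      nlinarith [ih hlen' hw]

lemma larssonLevel_succ_subset (ha : 0 ≤ a) (hb : 0 ≤ b) (hab : 3 * a + 2 * b < 1)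
    (hu : ∀ w, u w ∈ Set.Icc 0 (shiftRange a b)) (n : ℕ) :
    larssonLevel a b u (n + 1) ⊆ larssonLevel a b u n := by
  intro x hx
  obtain ⟨w, hw⟩ := mem_larssonLevel.1 hx
  obtain ⟨i, w, rfl⟩ := w.exists_eq_cons
  obtain ⟨h0, h1⟩ := childOffset_add_mem_Icc ha hab i (hu (i :: w.toList))
  have hpow : 0 ≤ a ^ n := pow_nonneg ha n
  rw [List.Vector.toList_cons, larssonLeft_cons, w.toList_length, pow_succ] at hw
  exact mem_larssonLevel.2 ⟨w, by constructor <;> nlinarith [hw.1, hw.2]⟩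

lemma isCompact_larssonLevel (a b : ℝ) (u : LarssonWord → ℝ) (n : ℕ) :
    IsCompact (larssonLevel a b u n) := by
  rw [show larssonLevel a b u n = ⋃ w : LevelWord n, _ from
    Set.ext fun x => mem_larssonLevel.trans Set.mem_iUnion.symm]
  exact isCompact_iUnion fun w => isCompact_Icc

end Geometry

/-! ### The level densities -/

section LevelDensity

variable {a b : ℝ} {u v : LarssonWord → ℝ} {n : ℕ} {h : ℝ → ℝ}

/-- The rescaled difference between `d` and the displacement of the level-`n` intervals indexed by
`p`, taken in the sets given by `u` and by `v`. The two intervals contain points with difference `d`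
if and only if it lies in `[-1, 1]`. -/
noncomputable def pairOffset (a b : ℝ) (u v : LarssonWord → ℝ) (d : ℝ)
    (p : LevelWord n × LevelWord n) : ℝ :=
  (d - (larssonLeft a b v p.2.toList - larssonLeft a b u p.1.toList)) / a ^ n

/-- The sum of copies of the density `h` carried by all pairs of level-`n` intervals. When `h` is
the stationary density, it is at `d` the density of the difference of two points chosen by the
natural measures of the two random sets, conditionally on the first `n` levels. -/
noncomputable def levelDensity (h : ℝ → ℝ) (a b : ℝ) (u v : LarssonWord → ℝ) (n : ℕ) (d : ℝ) : ℝ :=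
  ((4 * a) ^ n)⁻¹ * ∑ p : LevelWord n × LevelWord n, h (pairOffset a b u v d p)

/-- The contribution to the next level of a pair of intervals with offset `e`, whose children have
the random shifts `x` and `y`. -/
noncomputable def childAverage (h : ℝ → ℝ) (a b e : ℝ) (x y : Fin 2 → ℝ) : ℝ :=
  (4 * a)⁻¹ *
    ∑ i, ∑ j, h ((e - (childOffset a b j + y j - (childOffset a b i + x i))) / a)

lemma card_levelWord_prod (n : ℕ) : Fintype.card (LevelWord n × LevelWord n) = 4 ^ n := by
  rw [Fintype.card_prod, card_vector, Fintype.card_fin, ← mul_pow, show 2 * 2 = 4 from rfl]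

lemma pairOffset_cons (ha : a ≠ 0) (d : ℝ) (i j : Fin 2) (p : LevelWord n × LevelWord n) :
    pairOffset a b u v d (i ::ᵥ p.1, j ::ᵥ p.2) =
      (pairOffset a b u v d p - (childOffset a b j + v (j :: p.2.toList) -
        (childOffset a b i + u (i :: p.1.toList)))) / a := by
  simp only [pairOffset, List.Vector.toList_cons, larssonLeft_cons, List.Vector.toList_length,
    Nat.succ_eq_add_one, pow_succ]
  field_simp
  ring

lemma levelDensity_succ (ha : a ≠ 0) (h : ℝ → ℝ) (u v : LarssonWord → ℝ) (n : ℕ) (d : ℝ) :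
    levelDensity h a b u v (n + 1) d = ((4 * a) ^ n)⁻¹ * ∑ p : LevelWord n × LevelWord n,
      childAverage h a b (pairOffset a b u v d p) (fun i => u (i :: p.1.toList))
        fun j => v (j :: p.2.toList) := by
  have hchild (p : LevelWord n × LevelWord n) : childAverage h a b (pairOffset a b u v d p)
      (fun i => u (i :: p.1.toList)) (fun j => v (j :: p.2.toList)) =
        (4 * a)⁻¹ * ∑ i, ∑ j, h (pairOffset a b u v d (i ::ᵥ p.1, j ::ᵥ p.2)) := by
    simp only [childAverage, pairOffset_cons ha]
  simp only [hchild]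
  rw [← Finset.mul_sum, ← mul_assoc, ← mul_inv, ← pow_succ]
  simp only [levelDensity, Fintype.sum_prod_type, sum_levelWord_succ]
  congr 1
  exact Finset.sum_congr rfl fun _ _ => Finset.sum_comm

lemma levelDensity_nonneg (ha : 0 ≤ a) (h0 : ∀ x, 0 ≤ h x) (u v : LarssonWord → ℝ) (n : ℕ)
    (d : ℝ) : 0 ≤ levelDensity h a b u v n d :=
  mul_nonneg (by positivity) (Finset.sum_nonneg fun _ _ => h0 _)

lemma levelDensity_zero (h : ℝ → ℝ) (u v : LarssonWord → ℝ) (d : ℝ) :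
    levelDensity h a b u v 0 d = h d := by
  have hoff (p : LevelWord 0 × LevelWord 0) : pairOffset a b u v d p = d := by
    simp [pairOffset, List.Vector.eq_nil, larssonLeft]
  simp [levelDensity, hoff]

lemma one_le_abs_pairOffset (ha : 0 < a) (hb : 0 ≤ b) (hab : 3 * a + 2 * b < 1)
    (hu : ∀ w, u w ∈ Set.Icc 0 (shiftRange a b)) (hv : ∀ w, v w ∈ Set.Icc 0 (shiftRange a b))
    {d : ℝ} (hd : 1 ≤ |d|) (p : LevelWord n × LevelWord n) : 1 ≤ |pairOffset a b u v d p| := by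
  have h1 := larssonLeft_mem_Icc ha.le hb hab hu p.1.toList
  have h2 := larssonLeft_mem_Icc ha.le hb hab hv p.2.toList
  rw [List.Vector.toList_length] at h1 h2
  have hdist : |larssonLeft a b v p.2.toList - larssonLeft a b u p.1.toList| ≤ 1 - a ^ n :=
    abs_sub_le_iff.2 ⟨by linarith [h1.1, h2.2], by linarith [h1.2, h2.1]⟩
  rw [pairOffset, abs_div, abs_of_pos (pow_pos ha n), one_le_div (pow_pos ha n)]
  linarith [abs_sub_abs_le_abs_sub d (larssonLeft a b v p.2.toList - larssonLeft a b u p.1.toList)]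

lemma levelDensity_eq_zero (ha : 0 < a) (hb : 0 ≤ b) (hab : 3 * a + 2 * b < 1)
    (hu : ∀ w, u w ∈ Set.Icc 0 (shiftRange a b)) (hv : ∀ w, v w ∈ Set.Icc 0 (shiftRange a b))
    (h0 : ∀ x, 1 ≤ |x| → h x = 0) {d : ℝ} (hd : 1 ≤ |d|) : levelDensity h a b u v n d = 0 :=
  mul_eq_zero_of_right _ <| Finset.sum_eq_zero fun p _ =>
    h0 _ (one_le_abs_pairOffset ha hb hab hu hv hd p)

lemma continuous_levelDensity (hh : Continuous h) (u v : LarssonWord → ℝ) (n : ℕ) :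
    Continuous (levelDensity h a b u v n) := by
  unfold levelDensity pairOffset
  fun_prop

lemma lipschitzWith_levelDensity (ha : 0 < a) {K : ℝ≥0} (hK : LipschitzWith K h)
    (u v : LarssonWord → ℝ) (n : ℕ) :
    LipschitzWith (K * (a⁻¹ ^ 2).toNNReal ^ n) (levelDensity h a b u v n) := by
  refine LipschitzWith.of_dist_le_mul fun d d' => ?_
  rw [NNReal.coe_mul, NNReal.coe_pow, Real.coe_toNNReal _ (by positivity)]
  have hoff (p : LevelWord n × LevelWord n) :
      dist (pairOffset a b u v d p) (pairOffset a b u v d' p) = a⁻¹ ^ n * dist d d' := by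
    rw [Real.dist_eq, Real.dist_eq, pairOffset, pairOffset, ← sub_div, sub_sub_sub_cancel_right,
      abs_div, abs_of_pos (pow_pos ha n), div_eq_inv_mul, inv_pow]
  calc dist (levelDensity h a b u v n d) (levelDensity h a b u v n d')
      = ((4 * a) ^ n)⁻¹ *
          dist (∑ p, h (pairOffset a b u v d p)) (∑ p, h (pairOffset a b u v d' p)) := by
        rw [levelDensity, levelDensity, Real.dist_eq, ← mul_sub, abs_mul,
          abs_of_pos (by positivity), Real.dist_eq]
    _ ≤ ((4 * a) ^ n)⁻¹ * ∑ _p : LevelWord n × LevelWord n, K * (a⁻¹ ^ n * dist d d') := by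
        gcongr
        exact dist_sum_sum_le_of_le _ fun p _ =>
          (hK.dist_le_mul _ _).trans_eq (by rw [hoff])
    _ = K * (a⁻¹ ^ 2) ^ n * dist d d' := by
        rw [Finset.sum_const, Finset.card_univ, card_levelWord_prod, nsmul_eq_mul, Nat.cast_pow,
          Nat.cast_ofNat, ← pow_mul, mul_comm 2 n, pow_mul, mul_pow, inv_pow]
        field_simp

lemma integral_levelDensity (ha : 0 < a) (hh : Integrable h) (u v : LarssonWord → ℝ) (n : ℕ) :
    ∫ d, levelDensity h a b u v n d = ∫ x, h x := by
  have hpair (p : LevelWord n × LevelWord n) :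
      ∫ d, h (pairOffset a b u v d p) = a ^ n * ∫ x, h x := by
    unfold pairOffset
    rw [integral_sub_right_eq_self fun x => h (x / a ^ n), Measure.integral_comp_div,
      abs_of_pos (pow_pos ha n), smul_eq_mul]
  have hint (p : LevelWord n × LevelWord n) : Integrable fun d => h (pairOffset a b u v d p) :=
    (hh.comp_div (pow_pos ha n).ne').comp_sub_right _
  unfold levelDensity
  rw [integral_const_mul, integral_finsetSum _ fun p _ => hint p]
  simp only [hpair]
  rw [Finset.sum_const, Finset.card_univ, card_levelWord_prod, nsmul_eq_mul, Nat.cast_pow,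
    Nat.cast_ofNat, mul_pow]
  field_simp

lemma eq_of_abs_pairOffset_lt_one (ha : 0 < a) (hb : 0 ≤ b) (hab : 3 * a + 2 * b < 1)
    (hu : ∀ w, u w ∈ Set.Icc 0 (shiftRange a b)) (hv : ∀ w, v w ∈ Set.Icc 0 (shiftRange a b))
    {d : ℝ} {p q : LevelWord n × LevelWord n} (hp : |pairOffset a b u v d p| < 1)
    (hq : |pairOffset a b u v d q| < 1) (hpq : p.1 = q.1 ∨ p.2 = q.2) : p = q := by
  rw [pairOffset, abs_div, abs_of_pos (pow_pos ha n), div_lt_one (pow_pos ha n), abs_lt] at hp hq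
  obtain ⟨hp1, hp2⟩ := hp
  obtain ⟨hq1, hq2⟩ := hq
  refine Prod.ext_iff.2 ⟨?_, ?_⟩ <;> by_contra hne
  · have hsep := two_mul_pow_le_abs_larssonLeft_sub ha.le hb hab hu
      (p.1.toList_length.trans q.1.toList_length.symm) (mt (List.Vector.eq _ _) hne)
    rw [p.1.toList_length, hpq.resolve_left hne] at *
    rcases le_abs.1 hsep with h | h <;> linarith
  · have hsep := two_mul_pow_le_abs_larssonLeft_sub ha.le hb hab hv
      (p.2.toList_length.trans q.2.toList_length.symm) (mt (List.Vector.eq _ _) hne)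
    rw [p.2.toList_length, hpq.resolve_right hne] at *
    rcases le_abs.1 hsep with h | h <;> linarith

lemma childAverage_eq_zero (ha : 0 < a) (hb : 0 ≤ b) (hab : 3 * a + 2 * b < 1)
    (h0 : ∀ x, 1 ≤ |x| → h x = 0) {e : ℝ} (he : 1 ≤ |e|) {x y : Fin 2 → ℝ}
    (hx : ∀ i, x i ∈ Set.Icc 0 (shiftRange a b)) (hy : ∀ i, y i ∈ Set.Icc 0 (shiftRange a b)) :
    childAverage h a b e x y = 0 := by
  refine mul_eq_zero_of_right _ (Finset.sum_eq_zero fun i _ => Finset.sum_eq_zero fun j _ =>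
    h0 _ ?_)
  have hi := childOffset_add_mem_Icc ha.le hab i (hx i)
  have hj := childOffset_add_mem_Icc ha.le hab j (hy j)
  have hdist : |childOffset a b j + y j - (childOffset a b i + x i)| ≤ 1 - a :=
    abs_sub_le_iff.2 ⟨by linarith [hi.1, hj.2], by linarith [hi.2, hj.1]⟩
  rw [abs_div, abs_of_pos ha, one_le_div ha]
  linarith [abs_sub_abs_le_abs_sub e (childOffset a b j + y j - (childOffset a b i + x i))]

lemma childAverage_nonneg (ha : 0 ≤ a) (h0 : ∀ x, 0 ≤ h x) (b e : ℝ) (x y : Fin 2 → ℝ) :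
    0 ≤ childAverage h a b e x y :=
  mul_nonneg (by positivity) (Finset.sum_nonneg fun _ _ => Finset.sum_nonneg fun _ _ => h0 _)

lemma childAverage_le (ha : 0 < a) {M : ℝ} (hM : ∀ x, h x ≤ M) (b e : ℝ) (x y : Fin 2 → ℝ) :
    childAverage h a b e x y ≤ a⁻¹ * M := by
  calc childAverage h a b e x y ≤ (4 * a)⁻¹ * ∑ _i : Fin 2, ∑ _j : Fin 2, M := by
        unfold childAverage
        gcongr
        exact hM _
    _ = a⁻¹ * M := by
        simp only [Fin.sum_univ_two]
        field_simp
        ring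

lemma exists_mem_larssonLevel_sub_eq (ha : 0 < a) (h0 : ∀ x, 1 ≤ |x| → h x = 0) {d : ℝ}
    (hd : levelDensity h a b u v n d ≠ 0) :
    ∃ x ∈ larssonLevel a b u n, x + d ∈ larssonLevel a b v n := by
  obtain ⟨p, -, hp⟩ := Finset.exists_ne_zero_of_sum_ne_zero (right_ne_zero_of_mul hd)
  have hlt : |pairOffset a b u v d p| < 1 := not_le.1 (mt (h0 _) hp)
  rw [pairOffset, abs_div, abs_of_pos (pow_pos ha n), div_lt_one (pow_pos ha n), abs_lt] at hlt
  let x := larssonLeft a b u p.1.toList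
  let y := larssonLeft a b v p.2.toList
  have : 0 < a ^ n := pow_pos ha n
  refine ⟨max x (y - d), mem_larssonLevel.2 ⟨p.1, le_max_left _ _, max_le ?_ ?_⟩,
    mem_larssonLevel.2 ⟨p.2, ?_, ?_⟩⟩
  · linarith
  · linarith
  · linarith [le_max_right x (y - d)]
  · rw [← le_sub_iff_add_le]
    exact max_le (by linarith) (by linarith)

lemma exists_mem_larssonCantor_sub_eq (ha : 0 < a) (hb : 0 ≤ b) (hab : 3 * a + 2 * b < 1)
    (hu : ∀ w, u w ∈ Set.Icc 0 (shiftRange a b)) (hv : ∀ w, v w ∈ Set.Icc 0 (shiftRange a b))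
    (h0 : ∀ x, 1 ≤ |x| → h x = 0) {N : ℕ} {d : ℝ}
    (hd : ∀ n, N ≤ n → levelDensity h a b u v n d ≠ 0) :
    ∃ p ∈ larssonCantor a b u, ∃ q ∈ larssonCantor a b v, d = q - p := by
  let s (n : ℕ) : Set ℝ := larssonLevel a b u n ∩ (· + d) ⁻¹' larssonLevel a b v n
  have hclosed (n : ℕ) : IsClosed ((· + d) ⁻¹' larssonLevel a b v n) :=
    (isCompact_larssonLevel a b v n).isClosed.preimage (by fun_prop)
  have hcompact (n : ℕ) : IsCompact (s n) :=
    (isCompact_larssonLevel a b u n).inter_right (hclosed n)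
  have hsucc (n : ℕ) : s (n + 1) ⊆ s n :=
    Set.inter_subset_inter (larssonLevel_succ_subset ha.le hb hab hu n)
      (Set.preimage_mono (larssonLevel_succ_subset ha.le hb hab hv n))
  have hne (n : ℕ) : (s n).Nonempty := by
    obtain ⟨x, hx, hxd⟩ := exists_mem_larssonLevel_sub_eq ha h0 (hd _ (le_max_right n N))
    exact ⟨x, antitone_nat_of_succ_le hsucc (le_max_left n N) ⟨hx, hxd⟩⟩
  obtain ⟨x, hx⟩ := IsCompact.nonempty_iInter_of_sequence_nonempty_isCompact_isClosed s hsucc hne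
    (hcompact 0) fun n => (hcompact n).isClosed
  rw [Set.mem_iInter] at hx
  exact ⟨x, Set.mem_iInter.2 fun n => (hx n).1, x + d, Set.mem_iInter.2 fun n => (hx n).2,
    (add_sub_cancel_left x d).symm⟩

end LevelDensity

/-! ### Exponential moments -/

section ExpMoment

variable {Ω : Type*} [MeasurableSpace Ω] {P : Measure Ω} {X Y : Ω → ℝ}

/-- The exponential moment `E[exp X]`. It takes values in `[0, ∞]`, so that no integrability
conditions are needed. -/
noncomputable def expMoment (P : Measure Ω) (X : Ω → ℝ) : ℝ≥0∞ :=
  ∫⁻ ω, .ofReal (Real.exp (X ω)) ∂P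

lemma expMoment_mono (h : ∀ᵐ ω ∂P, X ω ≤ Y ω) : expMoment P X ≤ expMoment P Y :=
  lintegral_mono_ae <| h.mono fun _ hω => ENNReal.ofReal_le_ofReal (Real.exp_le_exp.2 hω)

lemma expMoment_const [IsProbabilityMeasure P] (c : ℝ) :
    expMoment P (fun _ => c) = .ofReal (Real.exp c) := by
  simp [expMoment]

lemma expMoment_const_add (c : ℝ) (X : Ω → ℝ) :
    expMoment P (fun ω => c + X ω) = .ofReal (Real.exp c) * expMoment P X := by
  simp only [expMoment, Real.exp_add, ENNReal.ofReal_mul (Real.exp_nonneg c)]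
  exact lintegral_const_mul' _ _ ENNReal.ofReal_ne_top

lemma expMoment_add_of_indepFun (hX : Measurable X) (hY : Measurable Y) (hXY : IndepFun X Y P) :
    expMoment P (fun ω => X ω + Y ω) = expMoment P X * expMoment P Y := by
  simp only [expMoment, Real.exp_add, ENNReal.ofReal_mul (Real.exp_nonneg _)]
  have hexp : Measurable fun x : ℝ => ENNReal.ofReal (Real.exp x) := by fun_prop
  exact lintegral_mul_eq_lintegral_mul_lintegral_of_indepFun (hexp.comp hX) (hexp.comp hY)
    (hXY.comp hexp hexp)

lemma expMoment_sum_of_disjoint [IsProbabilityMeasure P] {ι κ E : Type*} [mE : MeasurableSpace E]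
    {U : ι → Ω → E} (hU : ∀ i, Measurable (U i)) (hind : iIndepFun U P) {S : κ → Set ι}
    {A : Finset κ} (hS : (A : Set κ).PairwiseDisjoint S) {X : κ → Ω → ℝ}
    (hX : ∀ k ∈ A, Measurable[⨆ i ∈ S k, mE.comap (U i)] (X k)) :
    expMoment P (fun ω => ∑ k ∈ A, X k ω) = ∏ k ∈ A, expMoment P (X k) := by
  classical
  have hle (T : Set ι) : ⨆ i ∈ T, mE.comap (U i) ≤ ‹MeasurableSpace Ω› :=
    iSup₂_le fun i _ => (hU i).comap_le
  induction A using Finset.induction_on with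
  | empty => simp [expMoment]
  | insert k A hk ih =>
    rw [Finset.coe_insert, Set.pairwiseDisjoint_insert] at hS
    rw [Finset.forall_mem_insert] at hX
    have hsum : Measurable[⨆ i ∈ ⋃ l ∈ A, S l, mE.comap (U i)] fun ω => ∑ l ∈ A, X l ω :=
      Finset.measurable_fun_sum _ fun l hl => (hX.2 l hl).mono
        (biSup_mono fun i hi => Set.mem_biUnion hl hi) le_rfl
    have hdisj : Disjoint (S k) (⋃ l ∈ A, S l) :=
      Set.disjoint_iUnion₂_right.2 fun l hl => hS.2 l hl (ne_of_mem_of_not_mem hl hk).symm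
    simp only [Finset.sum_insert hk, Finset.prod_insert hk, ← ih hS.1 hX.2]
    exact expMoment_add_of_indepFun (hX.1.mono (hle _) le_rfl) (hsum.mono (hle _) le_rfl)
      (indepFun_of_measurable_iSup_comap hU hind hdisj hX.1 hsum)

lemma exp_mul_le_of_mem_Icc {s B x : ℝ} (hs : |s| * B ≤ 1) (hx : x ∈ Set.Icc 0 B) :
    Real.exp (s * x) ≤ 1 + (s + B * s ^ 2) * x := by
  have hsx : |s * x| ≤ 1 := by
    rw [abs_mul, abs_of_nonneg hx.1]
    exact (mul_le_mul_of_nonneg_left hx.2 (abs_nonneg s)).trans hs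
  have hexp := (abs_le.1 (Real.abs_exp_sub_one_sub_id_le hsx)).2
  have hsq : (s * x) ^ 2 ≤ B * s ^ 2 * x := by
    nlinarith [mul_le_mul_of_nonneg_left hx.2 (mul_nonneg (sq_nonneg s) hx.1)]
  linarith

lemma expMoment_const_mul_le [IsProbabilityMeasure P] {s B : ℝ} (hX : AEMeasurable X P)
    (hXB : ∀ᵐ ω ∂P, X ω ∈ Set.Icc 0 B) (hs : |s| * B ≤ 1) :
    expMoment P (fun ω => s * X ω) ≤ .ofReal (Real.exp ((s + B * s ^ 2) * ∫ ω, X ω ∂P)) := by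
  have hint : Integrable X P := .of_mem_Icc 0 B hX hXB
  have hint' : Integrable (fun ω => 1 + (s + B * s ^ 2) * X ω) P :=
    (integrable_const 1).add (hint.const_mul _)
  have hle : ∀ᵐ ω ∂P, Real.exp (s * X ω) ≤ 1 + (s + B * s ^ 2) * X ω :=
    hXB.mono fun ω => exp_mul_le_of_mem_Icc hs
  calc expMoment P (fun ω => s * X ω)
      ≤ ∫⁻ ω, .ofReal (1 + (s + B * s ^ 2) * X ω) ∂P :=
        lintegral_mono_ae (hle.mono fun ω => ENNReal.ofReal_le_ofReal)
    _ = .ofReal (1 + (s + B * s ^ 2) * ∫ ω, X ω ∂P) := by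
        rw [← ofReal_integral_eq_lintegral_ofReal hint'
          (hle.mono fun ω h => (Real.exp_nonneg _).trans h),
          integral_add (integrable_const 1) (hint.const_mul _), integral_const_mul]
        simp
    _ ≤ .ofReal (Real.exp ((s + B * s ^ 2) * ∫ ω, X ω ∂P)) := by
        gcongr
        linarith [Real.add_one_le_exp ((s + B * s ^ 2) * ∫ ω, X ω ∂P)]

lemma expMoment_const_mul_sum_le [IsProbabilityMeasure P] {ι κ E : Type*} [mE : MeasurableSpace E]
    {U : ι → Ω → E} (hU : ∀ i, Measurable (U i)) (hind : iIndepFun U P) {S : κ → Set ι}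
    {A : Finset κ} (hS : (A : Set κ).PairwiseDisjoint S) {X : κ → Ω → ℝ}
    (hX : ∀ k, Measurable[⨆ i ∈ S k, mE.comap (U i)] (X k)) {s B : ℝ}
    (hXB : ∀ k, ∀ᵐ ω ∂P, X k ω ∈ Set.Icc 0 B) (hs : |s| * B ≤ 1) :
    expMoment P (fun ω => s * ∑ k ∈ A, X k ω) ≤
      .ofReal (Real.exp ((s + B * s ^ 2) * ∑ k ∈ A, ∫ ω, X k ω ∂P)) := by
  have hX' (k : κ) : Measurable (X k) :=
    (hX k).mono (iSup₂_le fun i _ => (hU i).comap_le) le_rfl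
  simp only [Finset.mul_sum]
  rw [expMoment_sum_of_disjoint hU hind hS fun k _ => (hX k).const_mul s, Real.exp_sum,
    ENNReal.ofReal_prod_of_nonneg fun _ _ => Real.exp_nonneg _]
  exact Finset.prod_le_prod' fun k _ => expMoment_const_mul_le (hX' k).aemeasurable (hXB k) hs

lemma expMoment_comp_of_indepFun {E F : Type*} [MeasurableSpace E] [MeasurableSpace F]
    [IsFiniteMeasure P] {X : Ω → E} {Y : Ω → F} (hX : Measurable X) (hY : Measurable Y)
    (hXY : IndepFun X Y P) {g : E → F → ℝ} (hg : Measurable (Function.uncurry g)) :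
    expMoment P (fun ω => g (X ω) (Y ω)) =
      ∫⁻ ω', expMoment P (fun ω => g (X ω') (Y ω)) ∂P := by
  have hexp : Measurable fun p : E × F => ENNReal.ofReal (Real.exp (g p.1 p.2)) :=
    (Real.measurable_exp.comp hg).ennreal_ofReal
  calc expMoment P (fun ω => g (X ω) (Y ω))
      = ∫⁻ p, .ofReal (Real.exp (g p.1 p.2)) ∂(P.map fun ω => (X ω, Y ω)) :=
        (lintegral_map hexp (hX.prodMk hY)).symm
    _ = ∫⁻ x, ∫⁻ y, .ofReal (Real.exp (g x y)) ∂P.map Y ∂P.map X := by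
        rw [(indepFun_iff_map_prod_eq_prod_map_map hX.aemeasurable hY.aemeasurable).1 hXY,
          lintegral_prod _ hexp.aemeasurable]
    _ = ∫⁻ ω', ∫⁻ y, .ofReal (Real.exp (g (X ω') y)) ∂P.map Y ∂P :=
        lintegral_map hexp.lintegral_prod_right' hX
    _ = ∫⁻ ω', expMoment P (fun ω => g (X ω') (Y ω)) ∂P :=
        lintegral_congr fun ω' => lintegral_map (hexp.comp measurable_prodMk_left) hY

end ExpMoment

/-! ### Exponential moments along a sequence -/

section HasExpStep

variable {Ω : Type*} [MeasurableSpace Ω] {P : Measure Ω} {X : ℕ → Ω → ℝ} {r B : ℝ}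

/-- The step from `X n` to `X (n + 1)` is controlled at the level of exponential moments: up to a
quadratic error of relative size `r ^ (-n)`, the conditional exponential moment of `X (n + 1)` given
`X n` is that of a martingale. -/
def HasExpStep (P : Measure Ω) (X : ℕ → Ω → ℝ) (r B : ℝ) : Prop :=
  ∀ n μ s, |μ| * B ≤ r ^ n → expMoment P (fun ω => μ * X (n + 1) ω + s * X n ω) ≤
    expMoment P fun ω => (μ + B * μ ^ 2 / r ^ n + s) * X n ω

/-- The coefficient `c` with `4 * B * c = 1 - r⁻¹`, for which the variables
`c * (1 + (r ^ n)⁻¹) * X n` have bounded exponential moments: the decrease of `c * (1 + (r ^ n)⁻¹)`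
from `n` to `n + 1` is the error `B * (2 * c) ^ 2 / r ^ n` of the step. -/
noncomputable def stepRate (r B : ℝ) : ℝ := (1 - r⁻¹) / (4 * B)

lemma stepRate_pos (hr : 1 < r) (hB : 0 < B) : 0 < stepRate r B :=
  div_pos (sub_pos.2 (inv_lt_one_of_one_lt₀ hr)) (by positivity)

lemma four_mul_mul_stepRate (hB : 0 < B) : 4 * B * stepRate r B = 1 - r⁻¹ :=
  mul_div_cancel₀ _ (by positivity)

lemma HasExpStep.expMoment_le [IsProbabilityMeasure P] (hX : HasExpStep P X r B) (hr : 1 < r)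
    (hB : 0 < B) (h0 : ∀ᵐ ω ∂P, ∀ n, 0 ≤ X n ω) (hX0 : ∀ᵐ ω ∂P, X 0 ω ≤ B) (n : ℕ) :
    expMoment P (fun ω => stepRate r B * (1 + (r ^ n)⁻¹) * X n ω) ≤
      .ofReal (Real.exp (2 * stepRate r B * B)) := by
  have hc := stepRate_pos hr hB
  have hcB := four_mul_mul_stepRate (r := r) hB
  have hr1 : r⁻¹ < 1 := inv_lt_one_of_one_lt₀ hr
  have hr0 : 0 < r⁻¹ := inv_pos.2 (by linarith)
  set c := stepRate r B
  induction n with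
  | zero =>
    rw [← expMoment_const (P := P)]
    refine expMoment_mono (hX0.mono fun ω hω => ?_)
    rw [pow_zero, inv_one]
    nlinarith
  | succ n ih =>
    have hpow : 1 ≤ r ^ n := one_le_pow₀ hr.le
    have hq1 : (r ^ n)⁻¹ ≤ 1 := inv_le_one_of_one_le₀ hpow
    have : 0 < (r ^ n)⁻¹ := by positivity
    have hstep := hX n (c * (1 + (r ^ (n + 1))⁻¹)) 0
    rw [pow_succ, mul_inv] at hstep ⊢
    simp only [zero_mul, add_zero, div_eq_mul_inv] at hstep
    have hqr : (r ^ n)⁻¹ * r⁻¹ ≤ 1 := mul_le_one₀ hq1 hr0.le hr1.le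
    have hμ0 : 0 < c * (1 + (r ^ n)⁻¹ * r⁻¹) := by positivity
    have hμ2 : c * (1 + (r ^ n)⁻¹ * r⁻¹) ≤ 2 * c := by nlinarith
    refine ((hstep ?_).trans (expMoment_mono (h0.mono fun ω hω => ?_))).trans ih
    · rw [abs_of_pos hμ0]
      nlinarith
    refine mul_le_mul_of_nonneg_right ?_ (hω n)
    calc c * (1 + (r ^ n)⁻¹ * r⁻¹) + B * (c * (1 + (r ^ n)⁻¹ * r⁻¹)) ^ 2 * (r ^ n)⁻¹
        ≤ c * (1 + (r ^ n)⁻¹ * r⁻¹) + B * (2 * c) ^ 2 * (r ^ n)⁻¹ := by gcongr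
      _ = c * (1 + (r ^ n)⁻¹ * r⁻¹) + 4 * B * c * c * (r ^ n)⁻¹ := by ring
      _ = c * (1 + (r ^ n)⁻¹) := by
        rw [hcB]
        ring

lemma HasExpStep.expMoment_sub_le [IsProbabilityMeasure P] (hX : HasExpStep P X r B) (hr : 1 < r)
    (hB : 0 < B) (h0 : ∀ᵐ ω ∂P, ∀ n, 0 ≤ X n ω) (hX0 : ∀ᵐ ω ∂P, X 0 ω ≤ B) (n : ℕ) {σ : ℝ}
    (hσ : |σ| = 1) :
    expMoment P (fun ω => σ * stepRate r B * √r ^ n * (X (n + 1) ω - X n ω)) ≤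
      .ofReal (Real.exp (2 * stepRate r B * B)) := by
  have hc := stepRate_pos hr hB
  have hcB := four_mul_mul_stepRate (r := r) hB
  have hr0 : 0 < r := by linarith
  have hr1 : 0 < r⁻¹ := inv_pos.2 hr0
  set c := stepRate r B
  have hsq : (√r ^ n) ^ 2 = r ^ n := by rw [← pow_mul, mul_comm, pow_mul, Real.sq_sqrt hr0.le]
  have hsqrt : √r ^ n ≤ r ^ n := by
    gcongr
    exact Real.sqrt_le_iff.2 ⟨hr0.le, by nlinarith⟩
  have hstep := hX n (σ * c * √r ^ n) (-(σ * c * √r ^ n)) <| by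
    rw [abs_mul, abs_mul, hσ, one_mul, abs_of_pos hc, abs_of_pos (by positivity)]
    nlinarith [pow_pos (Real.sqrt_pos.2 hr0) n]
  calc expMoment P (fun ω => σ * c * √r ^ n * (X (n + 1) ω - X n ω))
      = expMoment P fun ω => σ * c * √r ^ n * X (n + 1) ω + -(σ * c * √r ^ n) * X n ω := by
        congr 1 with ω
        ring
    _ ≤ _ := hstep
    _ ≤ expMoment P fun ω => c * (1 + (r ^ n)⁻¹) * X n ω := by
        refine expMoment_mono (h0.mono fun ω hω => mul_le_mul_of_nonneg_right ?_ (hω n))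
        have hμ : B * (σ * c * √r ^ n) ^ 2 / r ^ n = B * c * c := by
          rw [mul_pow, mul_pow, ← sq_abs σ, hσ, hsq]
          field_simp
        have : 0 < (r ^ n)⁻¹ := by positivity
        rw [hμ]
        nlinarith
    _ ≤ .ofReal (Real.exp (2 * c * B)) := hX.expMoment_le hr hB h0 hX0 n

lemma measure_lt_abs_le_of_expMoment_le {Y : Ω → ℝ} (hY : Measurable Y) {M : ℝ≥0∞}
    (h1 : expMoment P Y ≤ M) (h2 : expMoment P (fun ω => -Y ω) ≤ M) (l : ℝ) :
    P {ω | l < |Y ω|} ≤ 2 * M * .ofReal (Real.exp (-l)) := by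
  have hmarkov {Z : Ω → ℝ} (hZ : Measurable Z) (hM : expMoment P Z ≤ M) :
      P {ω | l < Z ω} ≤ M * .ofReal (Real.exp (-l)) := by
    calc P {ω | l < Z ω}
        ≤ P {ω | .ofReal (Real.exp l) ≤ ENNReal.ofReal (Real.exp (Z ω))} :=
          measure_mono fun ω hω => ENNReal.ofReal_le_ofReal (Real.exp_le_exp.2 (le_of_lt hω))
      _ ≤ expMoment P Z / .ofReal (Real.exp l) :=
          meas_ge_le_lintegral_div (by fun_prop)
            (ENNReal.ofReal_pos.2 (Real.exp_pos l)).ne' ENNReal.ofReal_ne_top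
      _ ≤ M * .ofReal (Real.exp (-l)) := by
          rw [div_eq_mul_inv, Real.exp_neg, ENNReal.ofReal_inv_of_pos (Real.exp_pos l)]
          gcongr
  calc P {ω | l < |Y ω|} ≤ P ({ω | l < Y ω} ∪ {ω | l < -Y ω}) :=
        measure_mono fun ω (hω : l < |Y ω|) => lt_abs.1 hω
    _ ≤ P {ω | l < Y ω} + P {ω | l < -Y ω} := measure_union_le _ _
    _ ≤ M * .ofReal (Real.exp (-l)) + M * .ofReal (Real.exp (-l)) :=
        add_le_add (hmarkov hY h1) (hmarkov hY.neg h2)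
    _ = 2 * M * .ofReal (Real.exp (-l)) := by ring

lemma HasExpStep.measure_lt_abs_sub_le [IsProbabilityMeasure P] (hX : HasExpStep P X r B)
    (hXm : ∀ n, Measurable (X n)) (hr : 1 < r) (hB : 0 < B) (h0 : ∀ᵐ ω ∂P, ∀ n, 0 ≤ X n ω)
    (hX0 : ∀ᵐ ω ∂P, X 0 ω ≤ B) (n : ℕ) (l : ℝ) :
    P {ω | l / (stepRate r B * √r ^ n) < |X (n + 1) ω - X n ω|} ≤
      2 * .ofReal (Real.exp (2 * stepRate r B * B)) * .ofReal (Real.exp (-l)) := by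
  have hc : 0 < stepRate r B * √r ^ n :=
    mul_pos (stepRate_pos hr hB) (pow_pos (Real.sqrt_pos.2 (by linarith)) n)
  have h (σ : ℝ) (hσ : |σ| = 1) := hX.expMoment_sub_le hr hB h0 hX0 n hσ
  have hset : {ω | l / (stepRate r B * √r ^ n) < |X (n + 1) ω - X n ω|} =
      {ω | l < |stepRate r B * √r ^ n * (X (n + 1) ω - X n ω)|} := by
    ext ω
    rw [Set.mem_ofPred_eq, Set.mem_ofPred_eq, abs_mul, abs_of_pos hc, div_lt_iff₀' hc]
  rw [hset]
  refine measure_lt_abs_le_of_expMoment_le ?_ ?_ ?_ l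
  · exact ((hXm (n + 1)).sub (hXm n)).const_mul _
  · simpa only [one_mul] using h 1 abs_one
  · simpa only [neg_mul, one_mul] using h (-1) (by rw [abs_neg, abs_one])

end HasExpStep

/-! ### Uniform convergence from pointwise tails -/

section UniformConvergence

lemma abs_le_of_abs_le_on_grid {f : ℝ → ℝ} {K : ℝ≥0} (hf : LipschitzWith K f) {N : ℕ} (hN : 0 < N)
    {δ : ℝ} (hδ : ∀ k ∈ Finset.Icc (-N : ℤ) N, |f (k / N)| ≤ δ) {d : ℝ}
    (hd : d ∈ Set.Icc (-1) 1) : |f d| ≤ δ + K / N := by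
  have hN0 : (0 : ℝ) < N := Nat.cast_pos.2 hN
  have hfloor := Int.floor_le (d * N)
  have hlt := Int.lt_floor_add_one (d * N)
  set k := ⌊d * N⌋
  have hk : k ∈ Finset.Icc (-N : ℤ) N := by
    refine Finset.mem_Icc.2 ⟨Int.le_floor.2 ?_, ?_⟩
    · push_cast
      nlinarith [hd.1]
    · exact_mod_cast hfloor.trans (mul_le_of_le_one_left hN0.le hd.2)
  have hdist : dist d (k / N) ≤ 1 / N := by
    rw [Real.dist_eq, abs_le, sub_le_iff_le_add, ← add_div, le_div_iff₀ hN0, le_sub_iff_add_le,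
      ← sub_eq_neg_add, ← sub_div, div_le_iff₀ hN0]
    constructor <;> linarith
  calc |f d| ≤ |f (k / N)| + |f d - f (k / N)| := by
        simpa only [add_sub_cancel] using abs_add_le (f (k / N)) (f d - f (k / N))
    _ ≤ δ + K * dist d (k / N) := add_le_add (hδ k hk) (hf.dist_le_mul _ _)
    _ ≤ δ + K * (1 / N) := by gcongr
    _ = δ + K / N := by rw [mul_one_div]

variable {Ω : Type*} [MeasurableSpace Ω] {P : Measure Ω}

lemma measure_exists_grid_lt_abs_le {Y : ℝ → Ω → ℝ} {δ : ℝ} {q : ℝ≥0∞}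
    (hq : ∀ d, P {ω | δ < |Y d ω|} ≤ q) {N : ℕ} (hN : 0 < N) :
    P {ω | ∃ k ∈ Finset.Icc (-N : ℤ) N, δ < |Y (k / N) ω|} ≤ 3 * N * q := by
  have hset : {ω | ∃ k ∈ Finset.Icc (-N : ℤ) N, δ < |Y (k / N) ω|} =
      ⋃ k ∈ Finset.Icc (-N : ℤ) N, {ω | δ < |Y (k / N) ω|} := by
    ext ω
    simp only [Set.mem_ofPred_eq, Set.mem_iUnion, exists_prop]
  have hcard : (Finset.Icc (-N : ℤ) N).card ≤ 3 * N := by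
    rw [Int.card_Icc]
    lia
  calc P {ω | ∃ k ∈ Finset.Icc (-N : ℤ) N, δ < |Y (k / N) ω|}
      ≤ ∑ k ∈ Finset.Icc (-N : ℤ) N, P {ω | δ < |Y (k / N) ω|} :=
        hset ▸ measure_biUnion_finset_le _ _
    _ ≤ (Finset.Icc (-N : ℤ) N).card • q := Finset.sum_le_card_nsmul _ _ _ fun k _ => hq _
    _ ≤ 3 * N * q := by
        rw [nsmul_eq_mul]
        gcongr
        exact_mod_cast hcard

lemma summable_nat_mul_div_pow {r : ℝ} (hr : 1 < r) (x : ℝ) :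
    Summable fun n : ℕ => n * x / r ^ n := by
  have hr0 : 0 < r := zero_lt_one.trans hr
  have h := summable_pow_mul_geometric_of_norm_lt_one (R := ℝ) 1 (r := r⁻¹) <| by
    rw [Real.norm_of_nonneg (inv_pos.2 hr0).le]
    exact inv_lt_one_of_one_lt₀ hr
  refine (h.mul_left x).congr fun n => ?_
  rw [pow_one, inv_pow]
  ring

lemma ae_eventually_abs_le_of_measure_lt_abs_le {G : ℕ → Ω → ℝ → ℝ} {K : ℕ → ℝ≥0}
    (hL : ∀ n ω, LipschitzWith (K n) (G n ω)) {δ : ℕ → ℝ} {C : ℝ≥0∞} (hC : C ≠ ∞) {M : ℕ}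
    (hM : 0 < M) (hδ : ∀ n d, P {ω | δ n < |G n ω d|} ≤ C * ((2 * M : ℝ≥0∞) ^ n)⁻¹) :
    ∀ᵐ ω ∂P, ∀ᶠ n in Filter.atTop, ∀ d ∈ Set.Icc (-1 : ℝ) 1, |G n ω d| ≤ δ n + K n / M ^ n := by
  have hbad (n : ℕ) : P {ω | ∃ k ∈ Finset.Icc (-(M ^ n : ℕ) : ℤ) (M ^ n : ℕ),
      δ n < |G n ω (k / (M ^ n : ℕ))|} ≤ 3 * C * 2⁻¹ ^ n := by
    have hMn : (M : ℝ≥0∞) ^ n * ((M : ℝ≥0∞) ^ n)⁻¹ = 1 :=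
      ENNReal.mul_inv_cancel (by positivity) (by finiteness)
    calc _ ≤ 3 * ((M ^ n : ℕ) : ℝ≥0∞) * (C * ((2 * M : ℝ≥0∞) ^ n)⁻¹) :=
          measure_exists_grid_lt_abs_le (hδ n) (pow_pos hM n)
      _ = 3 * C * 2⁻¹ ^ n * ((M : ℝ≥0∞) ^ n * ((M : ℝ≥0∞) ^ n)⁻¹) := by
          rw [mul_pow, ENNReal.mul_inv (.inr (by finiteness)) (.inr (by positivity)),
            ENNReal.inv_pow, Nat.cast_pow]
          ring
      _ = 3 * C * 2⁻¹ ^ n := by rw [hMn, mul_one]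
  have hsum : ∑' n : ℕ, 3 * C * 2⁻¹ ^ n ≠ ∞ := by
    rw [ENNReal.tsum_mul_left, ENNReal.tsum_geometric, ENNReal.one_sub_inv_two, inv_inv]
    finiteness
  filter_upwards [ae_eventually_notMem (ne_top_of_le_ne_top hsum (ENNReal.tsum_le_tsum hbad))]
    with ω hω
  filter_upwards [hω] with n hn d hd
  simpa only [Nat.cast_pow] using abs_le_of_abs_le_on_grid (hL n ω) (pow_pos hM n) (δ := δ n)
    (fun k hk => not_lt.1 fun hlt => hn ⟨k, hk, hlt⟩) hd

lemma exists_summable_ae_eventually_abs_sub_le [IsProbabilityMeasure P] {F : ℕ → Ω → ℝ → ℝ}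
    {r B : ℝ} {K A : ℝ≥0} (hF : ∀ d, HasExpStep P (fun n ω => F n ω d) r B)
    (hFm : ∀ n d, Measurable fun ω => F n ω d) (hr : 1 < r) (hB : 0 < B)
    (h0 : ∀ n ω d, 0 ≤ F n ω d) (hF0 : ∀ ω d, F 0 ω d ≤ B)
    (hL : ∀ n ω, LipschitzWith (K * A ^ n) (F n ω)) :
    ∃ ε : ℕ → ℝ, Summable ε ∧ ∀ᵐ ω ∂P, ∀ᶠ n in Filter.atTop, ∀ d ∈ Set.Icc (-1 : ℝ) 1,
      |F (n + 1) ω d - F n ω d| ≤ ε n := by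
  obtain ⟨M, hAM⟩ := exists_nat_gt A
  have hM : 0 < M := by exact_mod_cast (zero_le (a := A)).trans_lt hAM
  have hM0 : (0 : ℝ) < M := Nat.cast_pos.2 hM
  set c := stepRate r B
  -- The grid of mesh `M ^ (-n)` is fine enough for the Lipschitz constant `K * A ^ n`, and its
  -- `O(M ^ n)` points cost a union bound which the tail `(2 * M) ^ (-n)` beats.
  refine ⟨_, ?_, ae_eventually_abs_le_of_measure_lt_abs_le
    (G := fun n ω d => F (n + 1) ω d - F n ω d) (fun n ω => (hL (n + 1) ω).sub (hL n ω))
    (δ := fun n => n * Real.log (2 * M) / (c * √r ^ n))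
    (C := 2 * .ofReal (Real.exp (2 * c * B))) (by finiteness) hM fun n d => ?_⟩
  · have hs : 1 < √r := by rwa [Real.lt_sqrt zero_le_one, one_pow]
    have hq : (A : ℝ) / M < 1 := (div_lt_one hM0).2 (by exact_mod_cast hAM)
    refine Summable.add ?_ (((summable_geometric_of_lt_one (by positivity) hq).mul_left
      (K * (A + 1) : ℝ)).congr fun n => ?_)
    · refine (summable_nat_mul_div_pow hs (Real.log (2 * M) / c)).congr fun n => ?_
      rw [← mul_div_assoc, div_div]
    · push_cast
      rw [div_pow]
      ring
  · have htail := (hF d).measure_lt_abs_sub_le (hFm · d) hr hB (.of_forall fun ω n => h0 n ω d)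
      (.of_forall fun ω => hF0 ω d) n (n * Real.log (2 * M))
    rw [Real.exp_neg, Real.exp_nat_mul, Real.exp_log (by positivity),
      ENNReal.ofReal_inv_of_pos (by positivity), ENNReal.ofReal_pow (by positivity),
      ENNReal.ofReal_mul (by norm_num), ENNReal.ofReal_natCast, ENNReal.ofReal_ofNat] at htail
    exact htail

lemma exists_Ioo_ne_zero_of_eventually_abs_sub_le {f : ℕ → ℝ → ℝ} {ε : ℕ → ℝ} (hε : Summable ε)
    (hf : ∀ᶠ n in Filter.atTop, ∀ d ∈ Set.Icc (-1 : ℝ) 1, |f (n + 1) d - f n d| ≤ ε n)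
    (hcont : ∀ n, Continuous (f n)) (hsupp : ∀ n d, 1 ≤ |d| → f n d = 0)
    (hint : ∀ n, ∫ d, f n d = 1) :
    ∃ x y : ℝ, x < y ∧ ∃ N, ∀ d ∈ Set.Ioo x y, ∀ n, N ≤ n → f n d ≠ 0 := by
  obtain ⟨N₁, hN₁⟩ := Filter.eventually_atTop.1 hf
  obtain ⟨N₂, hN₂⟩ :=
    Metric.cauchySeq_iff.1 hε.hasSum.tendsto_sum_nat.cauchySeq (1 / 4) (by norm_num)
  set N := max N₁ N₂
  have hclose (n : ℕ) (hn : N ≤ n) (d : ℝ) (hd : d ∈ Set.Icc (-1 : ℝ) 1) :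
      dist (f N d) (f n d) < 1 / 4 := by
    calc dist (f N d) (f n d) ≤ ∑ k ∈ Finset.Ico N n, ε k :=
          dist_le_Ico_sum_of_dist_le (f := fun k => f k d) hn fun {k} hk _ => by
            rw [dist_comm, Real.dist_eq]
            exact hN₁ k ((le_max_left _ _).trans hk) d hd
      _ ≤ dist (∑ k ∈ Finset.range n, ε k) (∑ k ∈ Finset.range N, ε k) := by
          rw [Finset.sum_Ico_eq_sub _ hn]
          exact le_abs_self _
      _ < 1 / 4 := hN₂ n ((le_max_right _ _).trans hn) N (le_max_right _ _)
  have hmem {d : ℝ} (hd : 1 / 4 < f N d) : d ∈ Set.Icc (-1 : ℝ) 1 := by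
    refine abs_le.1 (le_of_not_gt fun hlt => ?_)
    rw [hsupp N d hlt.le] at hd
    norm_num at hd
  obtain ⟨d₀, hd₀⟩ : ∃ d, 1 / 4 < f N d := by
    by_contra! hle
    have hzero (d : ℝ) (hd : d ∉ Set.Icc (-1) 1) : f N d = 0 :=
      hsupp N d (le_of_not_ge fun h => hd (abs_le.1 h))
    have hI : ∫ d in Set.Icc (-1 : ℝ) 1, f N d = 1 :=
      (setIntegral_eq_integral_of_forall_compl_eq_zero hzero).trans (hint N)
    have hle' : ∫ d in Set.Icc (-1 : ℝ) 1, f N d ≤ ∫ _ in Set.Icc (-1 : ℝ) 1, 1 / 4 :=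
      integral_mono (hcont N).integrableOn_Icc (integrable_const _) hle
    rw [hI, setIntegral_const, Measure.real, Real.volume_Icc] at hle'
    norm_num at hle'
  obtain ⟨δ, hδ, hball⟩ := Metric.isOpen_iff.1 (isOpen_lt continuous_const (hcont N)) d₀ hd₀
  refine ⟨d₀ - δ, d₀ + δ, by linarith, N, fun d hd n hn h0 => ?_⟩
  have hd : 1 / 4 < f N d := hball (Real.ball_eq_Ioo d₀ δ ▸ hd)
  have h := hclose n hn d (hmem hd)
  rw [h0, Real.dist_0_eq_abs] at h
  linarith [le_abs_self (f N d)]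

end UniformConvergence

/-! ### The random level densities -/

section RandomDensity

variable {a b d : ℝ} {n : ℕ} {h : ℝ → ℝ} {Ω : Type*} {U : Bool × LarssonWord → Ω → ℝ}

/-- `pairOffset` for the two random sets with shifts `U (false, ·)` and `U (true, ·)`. -/
noncomputable def randomOffset (a b : ℝ) (U : Bool × LarssonWord → Ω → ℝ) (d : ℝ)
    (p : LevelWord n × LevelWord n) (ω : Ω) : ℝ :=
  pairOffset a b (fun w => U (false, w) ω) (fun w => U (true, w) ω) d p

/-- `levelDensity` for the two random sets with shifts `U (false, ·)` and `U (true, ·)`. -/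
noncomputable def randomDensity (h : ℝ → ℝ) (a b : ℝ) (U : Bool × LarssonWord → Ω → ℝ) (n : ℕ)
    (ω : Ω) (d : ℝ) : ℝ :=
  levelDensity h a b (fun w => U (false, w) ω) (fun w => U (true, w) ω) n d

/-- `childAverage` for the two random sets with shifts `U (false, ·)` and `U (true, ·)`, at a pair
of intervals `p` whose offset is fixed to be `e`. -/
noncomputable def randomChildAverage (h : ℝ → ℝ) (a b : ℝ) (U : Bool × LarssonWord → Ω → ℝ)
    (p : LevelWord n × LevelWord n) (e : ℝ) (ω : Ω) : ℝ :=
  childAverage h a b e (fun i => U (false, i :: p.1.toList) ω) fun j => U (true, j :: p.2.toList) ω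

section Measurability

lemma measurable_larssonLeft [MeasurableSpace Ω] {u : Ω → LarssonWord → ℝ} {w : LarssonWord}
    (hu : ∀ v : LarssonWord, v.length ≤ w.length → Measurable (u · v)) :
    Measurable fun ω => larssonLeft a b (u ω) w := by
  induction w with
  | nil => exact measurable_const
  | cons i w ih =>
    exact (ih fun v hv => hu v (hv.trans (Nat.le_succ _))).add
      (((hu (i :: w) le_rfl).const_add _).const_mul _)

lemma measurable_randomOffset [MeasurableSpace Ω]
    (hU : ∀ q : Bool × LarssonWord, q.2.length ≤ n → Measurable (U q))
    (p : LevelWord n × LevelWord n) : Measurable (randomOffset a b U d p) := by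
  have hleft (s : Bool) (w : LevelWord n) :
      Measurable fun ω => larssonLeft a b (fun w => U (s, w) ω) w.toList :=
    measurable_larssonLeft fun v hv => hU (s, v) (hv.trans_eq w.toList_length)
  exact (((hleft true p.2).sub (hleft false p.1)).const_sub d).div_const (a ^ n)

lemma measurable_randomDensity [MeasurableSpace Ω] (hh : Measurable h) (hU : ∀ q, Measurable (U q))
    (n : ℕ) (d : ℝ) : Measurable fun ω => randomDensity h a b U n ω d :=
  (Finset.measurable_sum _ fun p _ =>
    hh.comp (measurable_randomOffset (fun q _ => hU q) p)).const_mul _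

lemma measurable_childAverage [MeasurableSpace Ω] (hh : Measurable h) {e : Ω → ℝ}
    {x y : Fin 2 → Ω → ℝ} (he : Measurable e) (hx : ∀ i, Measurable (x i))
    (hy : ∀ j, Measurable (y j)) :
    Measurable fun ω => childAverage h a b (e ω) (x · ω) (y · ω) := by
  unfold childAverage
  fun_prop

end Measurability

variable [MeasurableSpace Ω] {P : Measure Ω}

lemma ae_forall_mem_Icc_shiftRange (hU : ∀ q, Measurable (U q))
    (hlaw : ∀ q, P.map (U q) = uniformLaw (shiftRange a b)) :
    ∀ᵐ ω ∂P, ∀ q, U q ω ∈ Set.Icc 0 (shiftRange a b) :=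
  ae_all_iff.2 fun q => ae_of_ae_map (hU q).aemeasurable (hlaw q ▸ ae_mem_Icc_uniformLaw _)

lemma integral_displacementLaw {f : ℝ → ℝ} (hab : 3 * a + 2 * b < 1) (hf : Measurable f) {M : ℝ}
    (hM : ∀ x, |f x| ≤ M) :
    ∫ D, f D ∂displacementLaw a b =
      4⁻¹ * ∑ i, ∑ j, ∫ p, f (childOffset a b j + p.2 - (childOffset a b i + p.1))
        ∂(uniformLaw (shiftRange a b)).prod (uniformLaw (shiftRange a b)) := by
  have := isProbabilityMeasure_uniformLaw (shiftRange_pos hab)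
  have hint (μ : Measure ℝ) [IsFiniteMeasure μ] : Integrable f μ :=
    .of_bound hf.aestronglyMeasurable M (.of_forall hM)
  rw [displacementLaw, integral_smul_measure, integral_finsetSum_measure fun i _ => hint _,
    ENNReal.toReal_inv, ENNReal.toReal_ofNat, smul_eq_mul]
  congr! 2 with i _
  rw [integral_finsetSum_measure fun i _ => hint _]
  exact Finset.sum_congr rfl fun j _ =>
    integral_map (by fun_prop) hf.aestronglyMeasurable

lemma indepFun_randomOffset_children (hU : ∀ q, Measurable (U q)) (hind : iIndepFun U P) (n : ℕ) :
    IndepFun (fun ω (p : LevelWord n × LevelWord n) => randomOffset a b U d p ω)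
      (fun ω (q : Bool × LevelWord (n + 1)) => U (q.1, q.2.toList) ω) P := by
  have hdisj : Disjoint {q : Bool × LarssonWord | q.2.length ≤ n} {q | q.2.length = n + 1} :=
    Set.disjoint_left.2 fun q (hq : q.2.length ≤ n) (hq' : q.2.length = n + 1) => by lia
  exact indepFun_of_measurable_iSup_comap hU hind hdisj
    (@measurable_pi_lambda _ _ _ (_) _ _ fun p =>
      @measurable_randomOffset _ _ _ _ _ _ (_) (fun q hq => measurable_iSup_comap hq) p)
    (@measurable_pi_lambda _ _ _ (_) _ _ fun q => measurable_iSup_comap q.2.toList_length)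

variable [IsProbabilityMeasure P]

lemma integral_comp_prodMk_eq_integral_prod {ι E F : Type*} [MeasurableSpace E]
    [NormedAddCommGroup F] [NormedSpace ℝ F] {V : ι → Ω → E} {ν : Measure E}
    (hV : ∀ i, Measurable (V i)) (hlaw : ∀ i, P.map (V i) = ν) (hind : iIndepFun V P) {i j : ι}
    (hij : i ≠ j) {f : E × E → F} (hf : StronglyMeasurable f) :
    ∫ ω, f (V i ω, V j ω) ∂P = ∫ z, f z ∂ν.prod ν := by
  have hmap : P.map (fun ω => (V i ω, V j ω)) = ν.prod ν := by
    rw [(hind.indepFun hij).map_prod_eq_prod_map_map (hV i).aemeasurable (hV j).aemeasurable,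
      hlaw, hlaw]
  rw [← hmap, integral_map ((hV i).prodMk (hV j)).aemeasurable hf.aestronglyMeasurable]

lemma integral_randomChildAverage (hab : 3 * a + 2 * b < 1)
    (hh : IsStationaryDensity a (displacementLaw a b) h) (hU : ∀ q, Measurable (U q))
    (hlaw : ∀ q, P.map (U q) = uniformLaw (shiftRange a b)) (hind : iIndepFun U P)
    (p : LevelWord n × LevelWord n) (e : ℝ) : ∫ ω, randomChildAverage h a b U p e ω ∂P = h e := by
  obtain ⟨K, hK⟩ := hh.lipschitz
  let f (D : ℝ) : ℝ := h ((e - D) / a)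
  have hf : Measurable f := hK.continuous.measurable.comp (by fun_prop)
  have hM (D : ℝ) : |f D| ≤ K * (2 * 1) :=
    abs_le_of_lipschitzWith_of_eq_zero hK zero_le_one hh.eq_zero _
  let D (i j : Fin 2) (z : ℝ × ℝ) : ℝ := childOffset a b j + z.2 - (childOffset a b i + z.1)
  let T (i j : Fin 2) (ω : Ω) : ℝ :=
    D i j (U (false, i :: p.1.toList) ω, U (true, j :: p.2.toList) ω)
  have hT (i j : Fin 2) : Measurable (T i j) :=
    (by fun_prop : Measurable (D i j)).comp ((hU _).prodMk (hU _))
  have hint (i j : Fin 2) : Integrable (fun ω => f (T i j ω)) P :=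
    .of_bound (hf.comp (hT i j)).aestronglyMeasurable _ (.of_forall fun _ => hM _)
  have hlawT (i j : Fin 2) : ∫ ω, f (T i j ω) ∂P = ∫ z, f (D i j z)
      ∂(uniformLaw (shiftRange a b)).prod (uniformLaw (shiftRange a b)) :=
    integral_comp_prodMk_eq_integral_prod (f := fun z => f (D i j z)) hU hlaw hind
      (by simp : (false, i :: p.1.toList) ≠ (true, j :: p.2.toList))
      (hf.comp (by fun_prop)).stronglyMeasurable
  calc ∫ ω, randomChildAverage h a b U p e ω ∂P
      = (4 * a)⁻¹ * ∑ i, ∑ j, ∫ ω, f (T i j ω) ∂P := by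
        simp only [← integral_finsetSum _ fun j _ => hint _ j]
        rw [← integral_finsetSum _ fun i _ => integrable_finsetSum _ fun j _ => hint i j,
          ← integral_const_mul]
        rfl
    _ = a⁻¹ * ∫ D, f D ∂displacementLaw a b := by
        rw [integral_displacementLaw hab hf hM, mul_inv_rev, mul_assoc]
        simp only [hlawT, D]
    _ = h e := (hh.fixed e).symm

/-- The indices of the shifts of the children of the pair of intervals `p`. -/
def childShifts (p : LevelWord n × LevelWord n) : Set (Bool × LarssonWord) :=
  Set.range (fun i => (false, i :: p.1.toList)) ∪ Set.range fun j => (true, j :: p.2.toList)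

lemma disjoint_childShifts {p q : LevelWord n × LevelWord n} (h1 : p.1 ≠ q.1) (h2 : p.2 ≠ q.2) :
    Disjoint (childShifts p) (childShifts q) := by
  rw [Set.disjoint_left]
  rintro _ (⟨i, rfl⟩ | ⟨i, rfl⟩) (⟨j, hj⟩ | ⟨j, hj⟩)
  · exact h1 (List.Vector.eq _ _ (List.tail_eq_of_cons_eq (Prod.ext_iff.1 hj).2.symm))
  · cases hj
  · cases hj
  · exact h2 (List.Vector.eq _ _ (List.tail_eq_of_cons_eq (Prod.ext_iff.1 hj).2.symm))

lemma expMoment_const_mul_sum_randomChildAverage_le (ha : 0 < a) (hb : 0 ≤ b)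
    (hab : 3 * a + 2 * b < 1) (hh : IsStationaryDensity a (displacementLaw a b) h) {M : ℝ}
    (hM : ∀ x, h x ≤ M) (hU : ∀ q, Measurable (U q))
    (hlaw : ∀ q, P.map (U q) = uniformLaw (shiftRange a b)) (hind : iIndepFun U P)
    {e : LevelWord n × LevelWord n → ℝ}
    (he : ∀ p q, |e p| < 1 → |e q| < 1 → p.1 = q.1 ∨ p.2 = q.2 → p = q)
    {s : ℝ} (hs : |s| * (a⁻¹ * M) ≤ 1) :
    expMoment P (fun ω => s * ∑ p, randomChildAverage h a b U p (e p) ω) ≤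
      .ofReal (Real.exp ((s + a⁻¹ * M * s ^ 2) * ∑ p, h (e p))) := by
  have hhm : Measurable h := hh.lipschitz.choose_spec.continuous.measurable
  -- The pairs with an offset in `(-1, 1)` form a matching, so the shifts of their children are
  -- disjoint independent families; the other pairs do not contribute.
  let A : Finset (LevelWord n × LevelWord n) := {p | |e p| < 1}
  have hA {p : LevelWord n × LevelWord n} : p ∈ A ↔ |e p| < 1 := Finset.mem_filter_univ p
  have hdisj : (A : Set (LevelWord n × LevelWord n)).PairwiseDisjoint childShifts :=
    fun p hp q hq hpq => disjoint_childShifts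
      (fun h1 => hpq (he p q (hA.1 hp) (hA.1 hq) (.inl h1)))
      fun h2 => hpq (he p q (hA.1 hp) (hA.1 hq) (.inr h2))
  have hmeas (p : LevelWord n × LevelWord n) :
      Measurable[⨆ q ∈ childShifts p, MeasurableSpace.comap (U q) inferInstance]
        (randomChildAverage h a b U p (e p)) :=
    @measurable_childAverage _ _ _ _ (_) hhm _ _ _ (@measurable_const _ _ _ (_) _)
      (fun i => measurable_iSup_comap (.inl ⟨i, rfl⟩))
      fun j => measurable_iSup_comap (.inr ⟨j, rfl⟩)
  have hactive := expMoment_const_mul_sum_le hU hind hdisj hmeas (fun p => .of_forall fun ω =>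
    ⟨childAverage_nonneg ha.le hh.nonneg .., childAverage_le ha hM ..⟩) hs
  have hsum : ∑ p ∈ A, ∫ ω, randomChildAverage h a b U p (e p) ω ∂P = ∑ p, h (e p) := by
    simp only [integral_randomChildAverage hab hh hU hlaw hind]
    exact Finset.sum_subset A.subset_univ fun p _ hp => hh.eq_zero _ (not_lt.1 (mt hA.2 hp))
  rw [hsum] at hactive
  refine (expMoment_mono ?_).trans hactive
  filter_upwards [ae_forall_mem_Icc_shiftRange hU hlaw] with ω hω
  refine le_of_eq (congrArg (s * ·) (Finset.sum_subset A.subset_univ fun p _ hp => ?_).symm)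
  exact childAverage_eq_zero ha hb hab hh.eq_zero (not_lt.1 (mt hA.2 hp)) (fun i => hω _)
    fun j => hω _

lemma expMoment_add_const_mul_sum_randomChildAverage_le (ha : 0 < a) (hb : 0 ≤ b)
    (hab : 3 * a + 2 * b < 1) (hh : IsStationaryDensity a (displacementLaw a b) h) {M : ℝ}
    (hM : ∀ x, h x ≤ M) (hU : ∀ q, Measurable (U q))
    (hlaw : ∀ q, P.map (U q) = uniformLaw (shiftRange a b)) (hind : iIndepFun U P)
    {e : LevelWord n × LevelWord n → ℝ}
    (he : ∀ p q, |e p| < 1 → |e q| < 1 → p.1 = q.1 ∨ p.2 = q.2 → p = q) {R : ℝ} (hR : 0 < R)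
    {μ : ℝ} (hμ : |μ| * (a⁻¹ * M) ≤ R) (s : ℝ) :
    expMoment P (fun ω => s * (R⁻¹ * ∑ p, h (e p)) +
        μ * R⁻¹ * ∑ p, randomChildAverage h a b U p (e p) ω) ≤
      .ofReal (Real.exp ((μ + a⁻¹ * M * μ ^ 2 / R + s) * (R⁻¹ * ∑ p, h (e p)))) := by
  have hs : |μ * R⁻¹| * (a⁻¹ * M) ≤ 1 := by
    rw [abs_mul, abs_of_pos (inv_pos.2 hR), mul_right_comm, ← div_eq_mul_inv]
    exact div_le_one_of_le₀ hμ hR.le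
  have hmatch := expMoment_const_mul_sum_randomChildAverage_le ha hb hab hh hM hU hlaw hind he hs
  refine (expMoment_const_add _ _).trans_le ((mul_le_mul_right hmatch _).trans_eq ?_)
  rw [← ENNReal.ofReal_mul (Real.exp_nonneg _), ← Real.exp_add]
  congr 2
  field_simp
  ring

lemma hasExpStep_randomDensity (ha : 1 / 4 < a) (hb : 0 ≤ b)
    (hab : 3 * a + 2 * b < 1) (hh : IsStationaryDensity a (displacementLaw a b) h) {M : ℝ}
    (hM : ∀ x, h x ≤ M) (hU : ∀ q, Measurable (U q))
    (hlaw : ∀ q, P.map (U q) = uniformLaw (shiftRange a b)) (hind : iIndepFun U P) (d : ℝ) :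
    HasExpStep P (fun n ω => randomDensity h a b U n ω d) (4 * a) (a⁻¹ * M) := by
  have ha0 : 0 < a := by linarith
  have hhm : Measurable h := hh.lipschitz.choose_spec.continuous.measurable
  intro n μ s hμ
  set R := (4 * a) ^ n
  have hR : 1 ≤ R := one_le_pow₀ (by linarith)
  let X (ω : Ω) (p : LevelWord n × LevelWord n) : ℝ := randomOffset a b U d p ω
  let Y (ω : Ω) (q : Bool × LevelWord (n + 1)) : ℝ := U (q.1, q.2.toList) ω
  let g (x : LevelWord n × LevelWord n → ℝ) (y : Bool × LevelWord (n + 1) → ℝ) : ℝ :=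
    s * (R⁻¹ * ∑ p, h (x p)) + μ * R⁻¹ * ∑ p, childAverage h a b (x p)
      (fun i => y (false, i ::ᵥ p.1)) fun j => y (true, j ::ᵥ p.2)
  have hX : Measurable X := measurable_pi_lambda _ (measurable_randomOffset fun q _ => hU q)
  have hY : Measurable Y := measurable_pi_lambda _ fun q => hU _
  have hg : Measurable (Function.uncurry g) := by
    refine .add (by fun_prop) (.const_mul (Finset.measurable_sum _ fun p _ => ?_) _)
    exact measurable_childAverage hhm (by fun_prop) (fun i => by fun_prop) fun j => by fun_prop
  calc expMoment P (fun ω => μ * randomDensity h a b U (n + 1) ω d +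
        s * randomDensity h a b U n ω d)
      = expMoment P fun ω => g (X ω) (Y ω) := by
        congr 1 with ω
        rw [randomDensity, levelDensity_succ ha0.ne', add_comm, ← mul_assoc]
        rfl
    _ = ∫⁻ ω', expMoment P (fun ω => g (X ω') (Y ω)) ∂P :=
        expMoment_comp_of_indepFun hX hY (indepFun_randomOffset_children hU hind n) hg
    _ ≤ expMoment P fun ω =>
          (μ + a⁻¹ * M * μ ^ 2 / R + s) * randomDensity h a b U n ω d := by
        refine lintegral_mono_ae ?_
        filter_upwards [ae_forall_mem_Icc_shiftRange hU hlaw] with ω' hω'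
        exact expMoment_add_const_mul_sum_randomChildAverage_le ha0 hb hab hh hM hU hlaw hind
          (e := X ω')
          (fun p q => eq_of_abs_pairOffset_lt_one ha0 hb hab (fun _ => hω' _) fun _ => hω' _)
          (zero_lt_one.trans_le hR) hμ s

lemma exists_summable_ae_eventually_abs_randomDensity_sub_le (ha : 1 / 4 < a) (hb : 0 ≤ b)
    (hab : 3 * a + 2 * b < 1) (hh : IsStationaryDensity a (displacementLaw a b) h)
    (hU : ∀ q, Measurable (U q)) (hlaw : ∀ q, P.map (U q) = uniformLaw (shiftRange a b))
    (hind : iIndepFun U P) :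
    ∃ ε : ℕ → ℝ, Summable ε ∧ ∀ᵐ ω ∂P, ∀ᶠ n in Filter.atTop, ∀ d ∈ Set.Icc (-1 : ℝ) 1,
      |randomDensity h a b U (n + 1) ω d - randomDensity h a b U n ω d| ≤ ε n := by
  have ha0 : 0 < a := by linarith
  obtain ⟨K, hK⟩ := hh.lipschitz
  have hM (x : ℝ) : h x ≤ K * (2 * 1) + 1 :=
    (le_abs_self _).trans ((abs_le_of_lipschitzWith_of_eq_zero hK zero_le_one hh.eq_zero x).trans
      (lt_add_one _).le)
  have : 0 < K * (2 * 1) + 1 := by positivity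
  refine exists_summable_ae_eventually_abs_sub_le
    (fun d => hasExpStep_randomDensity ha hb hab hh hM hU hlaw hind d)
    (measurable_randomDensity hK.continuous.measurable hU) (by linarith) (by positivity)
    (fun n ω d => levelDensity_nonneg ha0.le hh.nonneg _ _ n d) (fun ω d => ?_)
    fun n ω => lipschitzWith_levelDensity ha0 hK _ _ n
  rw [randomDensity, levelDensity_zero]
  have ha1 : 1 ≤ a⁻¹ := one_le_inv_iff₀.2 ⟨ha0, by linarith⟩
  exact (hM d).trans (le_mul_of_one_le_left (by positivity) ha1)

end RandomDensity

/-- Almost surely, the algebraic difference `C₂ − C₁` of two independent copies of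
Larsson's random Cantor set contains a nonempty open interval. -/
theorem larsson_difference_contains_interval
    (a b : ℝ) (ha : 1 / 4 < a) (hb : 0 < b) (hab : 3 * a + 2 * b < 1)
    {Ω : Type*} [MeasurableSpace Ω] (P : Measure Ω) [IsProbabilityMeasure P]
    (U : Bool × LarssonWord → Ω → ℝ)
    (hUmeas : ∀ p, Measurable (U p))
    (hUlaw : ∀ p, P.map (U p) =
      (ENNReal.ofReal ((1 - 3 * a - 2 * b) / 2))⁻¹ •
        volume.restrict (Set.Icc 0 ((1 - 3 * a - 2 * b) / 2)))
    (hUindep : iIndepFun U P) :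
    ∀ᵐ ω ∂P, ∃ x y : ℝ, x < y ∧ Set.Ioo x y ⊆
      {d : ℝ | ∃ p ∈ larssonCantor a b (fun w => U (false, w) ω),
               ∃ q ∈ larssonCantor a b (fun w => U (true, w) ω), d = q - p} := by
  have ha0 : 0 < a := by linarith
  obtain ⟨h, hh⟩ := exists_isStationaryDensity_displacementLaw ha0 hb.le hab
  obtain ⟨K, hK⟩ := hh.lipschitz
  obtain ⟨ε, hε, hconv⟩ := exists_summable_ae_eventually_abs_randomDensity_sub_le ha hb.le hab hh
    hUmeas hUlaw hUindep
  filter_upwards [hconv, ae_forall_mem_Icc_shiftRange hUmeas hUlaw] with ω hω hmem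
  obtain ⟨x, y, hxy, N, hN⟩ := exists_Ioo_ne_zero_of_eventually_abs_sub_le hε hω
    (fun n => continuous_levelDensity hK.continuous _ _ n)
    (fun n d hd => levelDensity_eq_zero ha0 hb.le hab (fun _ => hmem _) (fun _ => hmem _)
      hh.eq_zero hd)
    fun n => (integral_levelDensity ha0 hh.integrable _ _ n).trans hh.integral_eq_one
  exact ⟨x, y, hxy, fun d hd => exists_mem_larssonCantor_sub_eq ha0 hb.le hab (fun _ => hmem _)
    (fun _ => hmem _) hh.eq_zero (hN d hd)⟩
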